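/- For almost all integers n that are sums of two squares, r₂(n) = (log n)^{(log 2)/2 + o(1)}. More precisely: for every ε > 0, the number of n ≤ N in S = {a²+b² : a,b ∈ ℤ} for which |log r₂(n)/log log n − (log 2)/2| > ε is o(#{n ∈ S : n ≤ N}) as N → ∞. -/

import Mathlib

/-- r₂(n), the number of lattice points on the circle of radius √n. -/
noncomputable def r2 (n : ℕ) : ℕ := Set.ncard {l : ℤ × ℤ | l.1 ^ 2 + l.2 ^ 2 = (n : ℤ)}

/-!
For `n ≠ 0` the function `r₂(n) / 4` counts the ideals of norm `n` in `ℤ[i]`. It is multiplicative,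
equal to `2` at the primes `p ≡ 1 mod 4`, to `0` at the primes `p ≡ 3 mod 4`, and at most `a + 1` at
`p ^ a`. By the Hall–Tenenbaum inequality and Mertens' theorem in the residue class `1 mod 4`,
`∑ (r₂(n) / 4) ^ t ≪ N (log N) ^ (2 ^ t / 2 - 1)` for `t ≤ 1`, the sum being over the sums of two
squares `n ≤ N`. Since `2 ^ t = 1 + t log 2 + O(t ^ 2)`, Rankin's trick with a small `t = ± δ`
bounds the number of `n` at which `log r₂(n)` is not close to `(log 2 / 2) log log N` by
`N (log N) ^ (-1 / 2 - η)`, for some `η > 0`.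

This is negligible, because there are `≫ N (log N) ^ (-1 / 2)` sums of two squares up to `N`: every
`n` is a sum of two squares times distinct primes `≡ 3 mod 4`, so that `∑ 1 / m ≫ (log N) ^ (1 / 2)`
over the sums of two squares `m ≤ N`, by Mertens' theorem in the residue class `3 mod 4`. On
multiplying these `m` by primes `p ≡ 1 mod 4` with weight `log p`, one obtains
`∑ log m ≫ N (log N) ^ (1 / 2)`.
-/

namespace SumsOfTwoSquares

open Finset Filter Asymptotics ArithmeticFunction

theorem sum_Ioc_sum_divisorsAntidiagonal {M : Type*} [AddCommMonoid M] (f : ℕ → ℕ → M) (N : ℕ) :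
    ∑ n ∈ Ioc 0 N, ∑ x ∈ n.divisorsAntidiagonal, f x.1 x.2 =
      ∑ m ∈ Ioc 0 N, ∑ k ∈ Ioc 0 (N / m), f m k := by
  calc ∑ n ∈ Ioc 0 N, ∑ x ∈ n.divisorsAntidiagonal, f x.1 x.2
      = ∑ n ∈ Ioc 0 N, ∑ x ∈ Ioc 0 N ×ˢ Ioc 0 N with x.1 * x.2 = n, f x.1 x.2 := by
        refine sum_congr rfl fun n hn ↦ ?_
        rw [mem_Ioc] at hn
        rw [Nat.divisorsAntidiagonal_eq_prod_filter_of_le hn.1.ne' hn.2]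
    _ = ∑ x ∈ Ioc 0 N ×ˢ Ioc 0 N with x.1 * x.2 ≤ N, f x.1 x.2 := by
        simp_rw [sum_filter]
        rw [sum_comm]
        refine sum_congr rfl fun x hx ↦ ?_
        simp_all
    _ = ∑ m ∈ Ioc 0 N, ∑ k ∈ Ioc 0 (N / m), f m k := by
        rw [sum_filter, sum_product]
        refine sum_congr rfl fun m hm ↦ ?_
        rw [← sum_filter]
        refine sum_congr ?_ fun _ _ ↦ rfl
        ext k
        rw [mem_Ioc] at hm
        simp only [mem_filter, mem_Ioc, Nat.le_div_iff_mul_le hm.1, mul_comm m k]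
        refine ⟨fun h ↦ ⟨h.1.1, h.2⟩, fun h ↦ ⟨⟨h.1, ?_⟩, h.2⟩⟩
        exact (Nat.le_mul_of_pos_right k hm.1).trans h.2

theorem abs_sum_Ico_mul_le_of_antitoneOn {χ f : ℕ → ℝ} {B : ℝ} {a : ℕ}
    (hχ : ∀ n, |∑ k ∈ range n, χ k| ≤ B) (hf : AntitoneOn f (Set.Ici a))
    (hf₀ : ∀ n ≥ a, 0 ≤ f n) (b : ℕ) : |∑ k ∈ Ico a b, χ k * f k| ≤ 2 * B * f a := by
  set P : ℕ → ℝ := fun n ↦ ∑ k ∈ range n, χ k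
  have hB : 0 ≤ B := (abs_nonneg _).trans (hχ 0)
  obtain hba | hab := le_total b a
  · rw [Ico_eq_empty_of_le hba, sum_empty, abs_zero]
    have := hf₀ a le_rfl
    positivity
  suffices h : |∑ k ∈ Ico a b, χ k * f k - P b * f b| ≤ B * f a + B * (f a - f b) by
    have hPb : |P b * f b| ≤ B * f b := by
      rw [abs_mul, abs_of_nonneg (hf₀ b hab)]
      exact mul_le_mul_of_nonneg_right (hχ b) (hf₀ b hab)
    linarith [abs_sub_abs_le_abs_sub (∑ k ∈ Ico a b, χ k * f k) (P b * f b)]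
  induction b, hab using Nat.le_induction with
  | base =>
    rw [Ico_self, sum_empty, zero_sub, abs_neg, abs_mul, abs_of_nonneg (hf₀ a le_rfl), sub_self,
      mul_zero, add_zero]
    exact mul_le_mul_of_nonneg_right (hχ a) (hf₀ a le_rfl)
  | succ b hab ih =>
    have hstep : |P (b + 1) * (f b - f (b + 1))| ≤ B * (f b - f (b + 1)) := by
      have : 0 ≤ f b - f (b + 1) := sub_nonneg.2 (hf hab (hab.trans b.le_succ) b.le_succ)
      rw [abs_mul, abs_of_nonneg this]
      exact mul_le_mul_of_nonneg_right (hχ _) this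
    have hsum : ∑ k ∈ Ico a (b + 1), χ k * f k - P (b + 1) * f (b + 1) =
        (∑ k ∈ Ico a b, χ k * f k - P b * f b) + P (b + 1) * (f b - f (b + 1)) := by
      simp only [sum_Ico_succ_top hab, P, sum_range_succ]
      ring
    rw [hsum]
    linarith [abs_add_le (∑ k ∈ Ico a b, χ k * f k - P b * f b) (P (b + 1) * (f b - f (b + 1)))]

theorem exists_sum_div_log_le_of_sum_le {w : ℕ → ℝ} {κ C : ℝ} (hκ : 0 ≤ κ)
    (hw : ∀ N ≥ 1, ∑ n ∈ Ioc 0 N, w n ≤ κ * Real.log N + C) :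
    ∃ C', ∀ N ≥ 2, ∑ n ∈ Ioc 0 N, w n / Real.log n ≤ κ * Real.log (Real.log N) + C' := by
  set W : ℕ → ℝ := fun N ↦ ∑ n ∈ Ioc 0 N, w n
  set D : ℝ := ∑ n ∈ Ioc 0 2, w n / Real.log n - (W 2 - C) / Real.log 2 -
    κ * Real.log (Real.log 2)
  suffices h : ∀ N ≥ 2, ∑ n ∈ Ioc 0 N, w n / Real.log n ≤
      κ * Real.log (Real.log N) + (W N - C) / Real.log N + D by
    refine ⟨κ + D, fun N hN ↦ (h N hN).trans ?_⟩
    have hlog : 0 < Real.log N := Real.log_pos (by exact_mod_cast hN)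
    have : (W N - C) / Real.log N ≤ κ := by
      rw [div_le_iff₀ hlog]
      linarith [hw N (by lia)]
    linarith
  intro N hN
  induction N, hN using Nat.le_induction with
  | base =>
    simp only [D, Nat.cast_ofNat]
    linarith
  | succ N hN ih =>
    have hu : 0 < Real.log N := Real.log_pos (by exact_mod_cast hN)
    have huv : Real.log N ≤ Real.log (N + 1 : ℕ) :=
      Real.log_le_log (by positivity) (by push_cast; linarith)
    have hWN : W N - C ≤ κ * Real.log N := by linarith [hw N (by lia)]
    have hW : W (N + 1) = W N + w (N + 1) := sum_Ioc_succ_top N.zero_le w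
    rw [sum_Ioc_succ_top N.zero_le, hW]
    set u := Real.log N
    set v := Real.log (N + 1 : ℕ)
    have hv : 0 < v := hu.trans_le huv
    have hdiff : 1 - u / v ≤ Real.log v - Real.log u := by
      have := Real.one_sub_inv_le_log_of_pos (div_pos hv hu)
      rwa [inv_div, Real.log_div hv.ne' hu.ne'] at this
    have hdrop : (W N - C) / u - (W N - C) / v ≤ κ * (1 - u / v) := by
      have h0 : 0 ≤ 1 / u - 1 / v := sub_nonneg.2 (one_div_le_one_div_of_le hu huv)
      calc (W N - C) / u - (W N - C) / v = (W N - C) * (1 / u - 1 / v) := by ring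
        _ ≤ κ * u * (1 / u - 1 / v) := mul_le_mul_of_nonneg_right hWN h0
        _ = κ * (1 - u / v) := by field_simp
    have hlogs := mul_le_mul_of_nonneg_left hdiff hκ
    have : (W N + w (N + 1) - C) / v = (W N - C) / v + w (N + 1) / v := by ring
    linarith

/-! ### Mertens' theorem modulo 4 -/

theorem natCast_div_lt_natDiv_add_one (m n : ℕ) : (m : ℝ) / n < (m / n : ℕ) + 1 := by
  simpa only [Nat.floor_div_eq_div] using Nat.lt_floor_add_one ((m : ℝ) / n)

theorem sum_Ioc_mul_log_eq {h : ℕ → ℝ} (hmul : ∀ m n, h (m * n) = h m * h n) (N : ℕ) :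
    ∑ n ∈ Ioc 0 N, h n * Real.log n =
      ∑ d ∈ Ioc 0 N, h d * Λ d * ∑ m ∈ Ioc 0 (N / d), h m := by
  calc ∑ n ∈ Ioc 0 N, h n * Real.log n
      = ∑ n ∈ Ioc 0 N, ∑ x ∈ n.divisorsAntidiagonal, h x.1 * Λ x.1 * h x.2 := by
        refine sum_congr rfl fun n _ ↦ ?_
        rw [← vonMangoldt_sum, mul_sum, ← Nat.sum_divisorsAntidiagonal fun d _ ↦ h n * Λ d]
        refine sum_congr rfl fun x hx ↦ ?_
        rw [← (Nat.mem_divisorsAntidiagonal.1 hx).1, hmul]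
        ring
    _ = ∑ d ∈ Ioc 0 N, h d * Λ d * ∑ m ∈ Ioc 0 (N / d), h m := by
        simp_rw [sum_Ioc_sum_divisorsAntidiagonal (fun d m ↦ h d * Λ d * h m), mul_sum]

theorem sum_vonMangoldt_le (N : ℕ) : ∑ n ∈ Ioc 0 N, Λ n ≤ (Real.log 4 + 4) * N := by
  simpa [Chebyshev.psi] using Chebyshev.psi_le_const_mul_self N.cast_nonneg

section BoundedPartialSums

variable {χ : ℕ → ℝ} {B : ℝ} (hχ : ∀ n, |∑ k ∈ range n, χ k| ≤ B)

include hχ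

theorem abs_le_of_abs_sum_range_le (n : ℕ) : |χ n| ≤ 2 * B := by
  have : χ n = ∑ k ∈ range (n + 1), χ k - ∑ k ∈ range n, χ k := by
    rw [sum_range_succ, add_sub_cancel_left]
  rw [this]
  linarith [abs_sub (∑ k ∈ range (n + 1), χ k) (∑ k ∈ range n, χ k), hχ n, hχ (n + 1)]

theorem exists_abs_sum_div_sub_le : ∃ L, ∀ N : ℕ,
    |∑ n ∈ Ioc 0 N, χ n / n - L| ≤ 2 * B / (N + 1) := by
  set Q : ℕ → ℝ := fun N ↦ ∑ n ∈ Ioc 0 N, χ n / n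
  have hQ : ∀ N M, N ≤ M → dist (Q N) (Q M) ≤ 2 * B / (N + 1) := by
    intro N M hNM
    have hinv : AntitoneOn (fun n : ℕ ↦ (n : ℝ)⁻¹) (Set.Ici (N + 1)) := fun m hm n _ hmn ↦
      inv_anti₀ (Nat.cast_pos.2 (N.succ_pos.trans_le hm)) (Nat.cast_le.2 hmn)
    have hdiff : Q M - Q N = ∑ n ∈ Ico (N + 1) (M + 1), χ n * (n : ℝ)⁻¹ := by
      simp only [Q]
      rw [sub_eq_iff_eq_add', ← sum_Ioc_consecutive (fun n : ℕ ↦ χ n / n) N.zero_le hNM,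
        Ico_add_one_add_one_eq_Ioc]
      rfl
    rw [dist_comm, Real.dist_eq, hdiff, div_eq_mul_inv]
    exact_mod_cast abs_sum_Ico_mul_le_of_antitoneOn hχ hinv (fun n _ ↦ by positivity) (M + 1)
  have hlim : Tendsto (fun N : ℕ ↦ 2 * B / ((N : ℝ) + 1)) atTop (nhds 0) :=
    tendsto_const_div_atTop_nhds_zero_nat (2 * B) |>.comp (tendsto_add_atTop_nat 1) |>.congr
      fun N ↦ by simp
  obtain ⟨L, hL⟩ := cauchySeq_tendsto_of_complete (cauchySeq_of_le_tendsto_0' _ hQ hlim)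
  exact ⟨L, fun N ↦ le_of_tendsto (tendsto_const_nhds.dist hL)
    (eventually_atTop.2 ⟨N, fun M hM ↦ hQ N M hM⟩)⟩

theorem exists_abs_sum_mul_log_div_le : ∃ C, ∀ N : ℕ,
    |∑ n ∈ Ioc 0 N, χ n / n * Real.log n| ≤ C := by
  have hanti : AntitoneOn (fun n : ℕ ↦ Real.log n / n) (Set.Ici 3) := by
    have h3 : ∀ n ∈ Set.Ici (3 : ℕ), (n : ℝ) ∈ Set.Ici (Real.exp 1) := fun n hn ↦
      Real.exp_one_lt_three.le.trans (by exact_mod_cast hn)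
    exact fun m hm n hn hmn ↦
      Real.log_div_self_antitoneOn (h3 m hm) (h3 n hn) (Nat.cast_le.2 hmn)
  refine ⟨2 * B * (Real.log (3 : ℕ) / (3 : ℕ)) + |∑ n ∈ Ioc 0 2, χ n / n * Real.log n|,
    fun N ↦ ?_⟩
  obtain hN | hN := lt_or_ge N 2
  · have : ∑ n ∈ Ioc 0 N, χ n / n * Real.log n = 0 := by
      refine sum_eq_zero fun n hn ↦ ?_
      obtain rfl : n = 1 := by grind
      simp
    rw [this, abs_zero]
    have hB : 0 ≤ B := (abs_nonneg _).trans (hχ 0)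
    positivity
  · have htail := abs_sum_Ico_mul_le_of_antitoneOn hχ hanti (fun n _ ↦ by positivity) (N + 1)
    have : ∑ n ∈ Ioc 2 N, χ n / n * Real.log n =
        ∑ n ∈ Ico 3 (N + 1), χ n * (Real.log n / n) :=
      sum_congr rfl fun n _ ↦ by ring
    rw [← sum_Ioc_consecutive _ (Nat.zero_le 2) hN, this, add_comm]
    exact (abs_add_le _ _).trans (by gcongr)

-- The sum of `χ n * log n / n` is, up to a bounded error, `L` times the sum of `χ n * Λ n / n`.
theorem exists_abs_sum_mul_vonMangoldt_div_le (hmul : ∀ m n, χ (m * n) = χ m * χ n) {L : ℝ}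
    (hL₀ : L ≠ 0) (hL : ∀ N : ℕ, |∑ n ∈ Ioc 0 N, χ n / n - L| ≤ 2 * B / (N + 1)) :
    ∃ C, ∀ N : ℕ, |∑ n ∈ Ioc 0 N, χ n * (Λ n / n)| ≤ C := by
  obtain ⟨C, hC⟩ := exists_abs_sum_mul_log_div_le hχ
  have hB : 0 ≤ B := (abs_nonneg _).trans (hχ 0)
  refine ⟨(C + 2 * B * (2 * B) * (Real.log 4 + 4)) / |L|, fun N ↦ ?_⟩
  rw [le_div_iff₀ (abs_pos.2 hL₀), ← abs_mul]
  obtain rfl | hN := N.eq_zero_or_pos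
  · have := hC 0
    simp only [Ioc_self, sum_empty, zero_mul, abs_zero] at this ⊢
    positivity
  set Q : ℕ → ℝ := fun N ↦ ∑ n ∈ Ioc 0 N, χ n / n
  have hlog : ∑ n ∈ Ioc 0 N, χ n / n * Real.log n = ∑ d ∈ Ioc 0 N, χ d / d * Λ d * Q (N / d) :=
    sum_Ioc_mul_log_eq (h := fun n ↦ χ n / n)
      (fun m n ↦ by rw [hmul, Nat.cast_mul, mul_div_mul_comm]) N
  have hsplit : (∑ n ∈ Ioc 0 N, χ n * (Λ n / n)) * L = ∑ n ∈ Ioc 0 N, χ n / n * Real.log n -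
      ∑ d ∈ Ioc 0 N, χ d / d * Λ d * (Q (N / d) - L) := by
    rw [hlog, sum_mul, ← sum_sub_distrib]
    exact sum_congr rfl fun d _ ↦ by ring
  have hterm : ∀ d ∈ Ioc 0 N, |χ d / d * Λ d * (Q (N / d) - L)| ≤ 2 * B * (2 * B) / N * Λ d := by
    intro d hd
    have hd₀ : (0 : ℝ) < d := Nat.cast_pos.2 (mem_Ioc.1 hd).1
    have hΛ : 0 ≤ Λ d := vonMangoldt_nonneg
    have hfloor : (N : ℝ) / d ≤ (N / d : ℕ) + 1 :=
      (natCast_div_lt_natDiv_add_one N d).le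
    rw [abs_mul, abs_mul, abs_div, abs_of_nonneg hΛ, Nat.abs_cast]
    calc |χ d| / d * Λ d * |Q (N / d) - L|
        ≤ 2 * B / d * Λ d * (2 * B / (N / d)) := by
          gcongr
          · exact abs_le_of_abs_sum_range_le hχ d
          · exact (hL _).trans (by gcongr)
      _ = 2 * B * (2 * B) / N * Λ d := by field_simp
  have herror : |∑ d ∈ Ioc 0 N, χ d / d * Λ d * (Q (N / d) - L)| ≤
      2 * B * (2 * B) * (Real.log 4 + 4) := by
    calc |∑ d ∈ Ioc 0 N, χ d / d * Λ d * (Q (N / d) - L)|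
        ≤ ∑ d ∈ Ioc 0 N, 2 * B * (2 * B) / N * Λ d :=
          (abs_sum_le_sum_abs _ _).trans (sum_le_sum hterm)
      _ ≤ 2 * B * (2 * B) / N * ((Real.log 4 + 4) * N) := by
          rw [← mul_sum]
          gcongr
          exact sum_vonMangoldt_le N
      _ = 2 * B * (2 * B) * (Real.log 4 + 4) := by field_simp
  rw [hsplit]
  exact (abs_sub _ _).trans (add_le_add (hC N) herror)

end BoundedPartialSums

theorem log_factorial_eq_sum_vonMangoldt_mul_div (N : ℕ) :
    Real.log N.factorial = ∑ d ∈ Ioc 0 N, Λ d * (N / d : ℕ) := by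
  have : Real.log N.factorial = ∑ n ∈ Ioc 0 N, ArithmeticFunction.log n := by
    induction N with
    | zero => simp
    | succ N ih =>
      rw [sum_Ioc_succ_top N.zero_le, ← ih, Nat.factorial_succ, Nat.cast_mul,
        Real.log_mul (by positivity) (by positivity), log_apply, add_comm]
  rw [this, ← vonMangoldt_mul_zeta, sum_Ioc_mul_zeta_eq_sum]

theorem exists_abs_sum_vonMangoldt_div_sub_log_le : ∃ C, ∀ N : ℕ,
    |∑ n ∈ Ioc 0 N, Λ n / n - Real.log N| ≤ C := by
  refine ⟨Real.log 4 + 4, fun N ↦ ?_⟩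
  have h4 : 0 < Real.log 4 := Real.log_pos (by norm_num)
  obtain rfl | hN := N.eq_zero_or_pos
  · simp only [Ioc_self, sum_empty, Nat.cast_zero, Real.log_zero, sub_self, abs_zero]
    positivity
  have hN₀ : (0 : ℝ) < N := Nat.cast_pos.2 hN
  have hlower : N * Real.log N - N ≤ N * ∑ n ∈ Ioc 0 N, Λ n / n := by
    have hstirling := Stirling.le_log_factorial_stirling hN.ne'
    have hlog : 0 ≤ Real.log N := Real.log_natCast_nonneg N
    have hpi : 0 ≤ Real.log (2 * Real.pi) := Real.log_nonneg (by linarith [Real.pi_gt_three])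
    calc N * Real.log N - N ≤ Real.log N.factorial := by linarith
      _ = ∑ d ∈ Ioc 0 N, Λ d * (N / d : ℕ) := log_factorial_eq_sum_vonMangoldt_mul_div N
      _ ≤ ∑ d ∈ Ioc 0 N, Λ d * (N / d) := by
          gcongr
          exact Nat.cast_div_le
      _ = N * ∑ n ∈ Ioc 0 N, Λ n / n := by
          rw [mul_sum]
          exact sum_congr rfl fun d _ ↦ by ring
  have hupper : N * ∑ n ∈ Ioc 0 N, Λ n / n ≤ N * Real.log N + (Real.log 4 + 4) * N := by
    calc N * ∑ n ∈ Ioc 0 N, Λ n / n = ∑ d ∈ Ioc 0 N, Λ d * (N / d) := by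
          rw [mul_sum]
          exact sum_congr rfl fun d _ ↦ by ring
      _ ≤ ∑ d ∈ Ioc 0 N, Λ d * ((N / d : ℕ) + 1) := by
          gcongr with d
          exact (natCast_div_lt_natDiv_add_one N d).le
      _ = Real.log N.factorial + ∑ d ∈ Ioc 0 N, Λ d := by
          rw [log_factorial_eq_sum_vonMangoldt_mul_div, ← sum_add_distrib]
          exact sum_congr rfl fun d _ ↦ by ring
      _ ≤ N * Real.log N + (Real.log 4 + 4) * N := by
          rw [← Real.log_pow]
          gcongr
          · exact_mod_cast N.factorial_le_pow
          · exact sum_vonMangoldt_le N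
  rw [abs_le]
  constructor <;> refine le_of_mul_le_mul_left ?_ hN₀ <;> nlinarith

/-- The nonprincipal character modulo `4`, as a real-valued function on `ℕ`. -/
def χ₄ (n : ℕ) : ℝ := (ZMod.χ₄ n : ℤ)

theorem χ₄_eq_ite (n : ℕ) : χ₄ n = if n % 2 = 0 then 0 else if n % 4 = 1 then 1 else -1 := by
  rw [χ₄, ZMod.χ₄_nat_eq_if_mod_four]
  split_ifs <;> simp

theorem χ₄_mul (m n : ℕ) : χ₄ (m * n) = χ₄ m * χ₄ n := by
  simp only [χ₄, Nat.cast_mul, map_mul, Int.cast_mul]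

theorem abs_χ₄_le_one (n : ℕ) : |χ₄ n| ≤ 1 := by
  rw [χ₄_eq_ite]
  split_ifs <;> simp

theorem abs_sum_range_χ₄_le_one (n : ℕ) : |∑ k ∈ range n, χ₄ k| ≤ 1 := by
  have : ∑ k ∈ range n, χ₄ k = if n % 4 = 2 ∨ n % 4 = 3 then 1 else 0 := by
    induction n with
    | zero => simp
    | succ n ih =>
      rw [sum_range_succ, ih, χ₄_eq_ite]
      have : n % 4 < 4 := n.mod_lt (by norm_num)
      split_ifs <;> first | lia | norm_num
  rw [this]
  split_ifs <;> simp

theorem exists_abs_sum_χ₄_mul_vonMangoldt_div_le : ∃ C, ∀ N : ℕ,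
    |∑ n ∈ Ioc 0 N, χ₄ n * (Λ n / n)| ≤ C := by
  obtain ⟨L, hL⟩ := exists_abs_sum_div_sub_le abs_sum_range_χ₄_le_one
  have hL₀ : L ≠ 0 := by
    rintro rfl
    have htwo : ∑ n ∈ Ioc 0 2, χ₄ n / n = 1 := by
      simp [sum_Ioc_succ_top, χ₄_eq_ite]
    have := hL 2
    norm_num [htwo] at this
  exact exists_abs_sum_mul_vonMangoldt_div_le abs_sum_range_χ₄_le_one χ₄_mul hL₀ hL

theorem summable_vonMangoldt_div_of_not_odd_prime :
    Summable fun n : ℕ ↦ if n.Prime ∧ n ≠ 2 then 0 else Λ n / n := by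
  refine (vonMangoldt.summable_residueClass_non_primes_div (q := 1) 0).congr_cofinite ?_
  filter_upwards [(Set.finite_singleton 2).compl_mem_cofinite] with n hn
  have hn₂ : n ≠ 2 := hn
  have hmem : n ∈ {n : ℕ | (n : ZMod 1) = 0} := Subsingleton.elim _ _
  simp only [hn₂, ne_eq, not_false_eq_true, and_true, vonMangoldt.residueClass,
    Set.indicator_of_mem hmem]
  split_ifs <;> simp

theorem one_add_χ₄_mul_div_two {a n : ℕ} (ha : a = 1 ∨ a = 3) (hn : n % 2 = 1) :
    (1 + χ₄ (a * n)) / 2 = if n % 4 = a then 1 else 0 := by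
  rw [χ₄_eq_ite]
  obtain rfl | rfl := ha <;> split_ifs <;> first | lia | norm_num

theorem abs_ite_prime_mod_four_sub_le {a : ℕ} (ha : a = 1 ∨ a = 3) (n : ℕ) :
    |(if n.Prime ∧ n % 4 = a then Real.log n / n else 0) - (1 + χ₄ (a * n)) / 2 * (Λ n / n)| ≤
      if n.Prime ∧ n ≠ 2 then 0 else Λ n / n := by
  by_cases hn : n.Prime ∧ n ≠ 2
  · rw [one_add_χ₄_mul_div_two ha (hn.1.eq_two_or_odd.resolve_left hn.2),
      vonMangoldt_apply_prime hn.1]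
    simp [hn]
  · have hΛ : 0 ≤ Λ n / n := div_nonneg vonMangoldt_nonneg n.cast_nonneg
    have hzero : ¬ (n.Prime ∧ n % 4 = a) := fun h ↦ hn ⟨h.1, by rintro rfl; lia⟩
    simp only [hzero, hn, if_false, zero_sub, abs_neg, abs_mul, abs_of_nonneg hΛ]
    refine mul_le_of_le_one_left hΛ (abs_le.2 ?_)
    constructor <;> linarith [abs_le.1 (abs_χ₄_le_one (a * n))]

theorem exists_abs_sum_primes_mod_four_log_div_sub_le {a : ℕ} (ha : a = 1 ∨ a = 3) :
    ∃ C, ∀ N : ℕ, |∑ p ∈ Ioc 0 N with p.Prime ∧ p % 4 = a, Real.log p / p -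
      Real.log N / 2| ≤ C := by
  obtain ⟨C₁, h₁⟩ := exists_abs_sum_vonMangoldt_div_sub_log_le
  obtain ⟨C₂, h₂⟩ := exists_abs_sum_χ₄_mul_vonMangoldt_div_le
  set F : ℕ → ℝ := fun n ↦ if n.Prime ∧ n ≠ 2 then 0 else Λ n / n
  have hF : ∀ n, 0 ≤ F n := fun n ↦
    ite_nonneg le_rfl (div_nonneg vonMangoldt_nonneg n.cast_nonneg)
  refine ⟨(C₁ + C₂) / 2 + ∑' n, F n, fun N ↦ ?_⟩
  have hsum : |∑ p ∈ Ioc 0 N with p.Prime ∧ p % 4 = a, Real.log p / p -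
      ∑ n ∈ Ioc 0 N, (1 + χ₄ (a * n)) / 2 * (Λ n / n)| ≤ ∑' n, F n := by
    rw [sum_filter, ← sum_sub_distrib]
    exact (abs_sum_le_sum_abs _ _).trans <|
      (sum_le_sum fun n _ ↦ abs_ite_prime_mod_four_sub_le ha n).trans <|
      summable_vonMangoldt_div_of_not_odd_prime.sum_le_tsum _ fun n _ ↦ hF n
  have hexpand : ∑ n ∈ Ioc 0 N, (1 + χ₄ (a * n)) / 2 * (Λ n / n) =
      (∑ n ∈ Ioc 0 N, Λ n / n + χ₄ a * ∑ n ∈ Ioc 0 N, χ₄ n * (Λ n / n)) / 2 := by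
    simp_rw [χ₄_mul]
    rw [mul_sum, ← sum_add_distrib, sum_div]
    exact sum_congr rfl fun n _ ↦ by ring
  have hχ : |χ₄ a * ∑ n ∈ Ioc 0 N, χ₄ n * (Λ n / n)| ≤ C₂ := by
    rw [abs_mul]
    exact (mul_le_of_le_one_left (abs_nonneg _) (abs_χ₄_le_one a)).trans (h₂ N)
  rw [hexpand] at hsum
  have h₁N := h₁ N
  rw [abs_le] at *
  constructor <;> linarith

theorem exists_sum_inv_primes_mod_four_le {a : ℕ} (ha : a = 1 ∨ a = 3) :
    ∃ C, ∀ N : ℕ, 2 ≤ N → ∑ p ∈ Ioc 0 N with p.Prime ∧ p % 4 = a, (p : ℝ)⁻¹ ≤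
      1 / 2 * Real.log (Real.log N) + C := by
  obtain ⟨C, hC⟩ := exists_abs_sum_primes_mod_four_log_div_sub_le ha
  obtain ⟨C', hC'⟩ := exists_sum_div_log_le_of_sum_le (κ := 1 / 2) (C := C)
    (w := fun n ↦ if n.Prime ∧ n % 4 = a then Real.log n / n else 0) (by norm_num) fun N _ ↦ by
      rw [← sum_filter]
      linarith [(abs_le.1 (hC N)).2]
  refine ⟨C', fun N hN ↦ le_of_eq_of_le ?_ (hC' N hN)⟩
  rw [sum_filter]
  refine sum_congr rfl fun p _ ↦ ?_
  split_ifs with hp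
  · have : Real.log p ≠ 0 := (Real.log_pos (by exact_mod_cast hp.1.one_lt)).ne'
    rw [div_right_comm, div_self this, one_div]
  · rw [zero_div]

theorem exists_le_sum_log_primes_mod_four {a : ℕ} (ha : a = 1 ∨ a = 3) :
    ∃ c > 0, ∃ Y > 0, ∀ y : ℕ, Y ≤ y →
      c * (y : ℝ) ≤ ∑ p ∈ Ioc 0 y with p.Prime ∧ p % 4 = a, Real.log p := by
  obtain ⟨C, hC⟩ := exists_abs_sum_primes_mod_four_log_div_sub_le ha
  set K : ℕ := ⌈Real.exp (2 * (1 + 2 * C))⌉₊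
  have hK : Real.exp (2 * (1 + 2 * C)) ≤ K := Nat.le_ceil _
  have hK₀ : (0 : ℝ) < K := (Real.exp_pos _).trans_le hK
  refine ⟨(K : ℝ)⁻¹, inv_pos.2 hK₀, K, Nat.cast_pos.1 hK₀, fun y hy ↦ ?_⟩
  have hm : 0 < y / K := Nat.div_pos hy (Nat.cast_pos.1 hK₀)
  have hy₀ : (0 : ℝ) < y := hK₀.trans_le (by exact_mod_cast hy)
  have hlog : 2 * (1 + 2 * C) ≤ Real.log y - Real.log (y / K : ℕ) := by
    rw [← Real.log_div hy₀.ne' (by positivity)]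
    refine (Real.le_log_iff_exp_le (by positivity)).2 (hK.trans ?_)
    rw [le_div_iff₀ (by positivity)]
    exact_mod_cast Nat.mul_div_le y K
  have hone : 1 ≤ ∑ p ∈ Ioc (y / K) y with p.Prime ∧ p % 4 = a, Real.log p / p := by
    have hsplit := sum_Ioc_consecutive
      (fun p : ℕ ↦ if p.Prime ∧ p % 4 = a then Real.log p / p else 0) (y / K).zero_le
      (y.div_le_self K)
    simp only [← sum_filter] at hsplit
    linarith [abs_le.1 (hC y), abs_le.1 (hC (y / K))]
  have hterm : ∀ p ∈ Ioc (y / K) y, Real.log p / p ≤ K / y * Real.log p := by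
    intro p hp
    have hpy : (y : ℝ) / K ≤ p := (natCast_div_lt_natDiv_add_one y K).le.trans
      (by exact_mod_cast (mem_Ioc.1 hp).1)
    rw [div_eq_inv_mul, ← inv_div]
    exact mul_le_mul_of_nonneg_right (inv_anti₀ (by positivity) hpy) (Real.log_natCast_nonneg p)
  calc (K : ℝ)⁻¹ * y ≤ (K : ℝ)⁻¹ * y * ∑ p ∈ Ioc (y / K) y with p.Prime ∧ p % 4 = a,
          Real.log p / p := le_mul_of_one_le_right (by positivity) hone
    _ ≤ (K : ℝ)⁻¹ * y * ∑ p ∈ Ioc (y / K) y with p.Prime ∧ p % 4 = a, K / y * Real.log p := by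
        gcongr with p hp
        exact hterm p (mem_filter.1 hp).1
    _ = ∑ p ∈ Ioc (y / K) y with p.Prime ∧ p % 4 = a, Real.log p := by
        rw [← mul_sum]
        field_simp
    _ ≤ ∑ p ∈ Ioc 0 y with p.Prime ∧ p % 4 = a, Real.log p :=
        sum_le_sum_of_subset_of_nonneg
          (filter_subset_filter _ (Ioc_subset_Ioc_left (y / K).zero_le))
          fun p _ _ ↦ Real.log_natCast_nonneg p

/-! ### Lower bound for the number of sums of two squares -/

theorem sum_inv_le_sum_inv_mul_prod_one_add_inv {S P : ℕ → Prop} [DecidablePred S]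
    [DecidablePred P]
    (hSP : ∀ n > 0, ∃ m, ∃ T : Finset ℕ, S m ∧ (∀ p ∈ T, P p) ∧ n = m * ∏ p ∈ T, p) (N : ℕ) :
    ∑ n ∈ Ioc 0 N, (n : ℝ)⁻¹ ≤
      (∑ m ∈ Ioc 0 N with S m, (m : ℝ)⁻¹) * ∏ p ∈ Ioc 0 N with P p, (1 + (p : ℝ)⁻¹) := by
  choose! m T hm hT hmT using hSP
  have hinj : Set.InjOn (fun n ↦ (m n, T n)) (Ioc 0 N : Finset ℕ) := by
    intro a ha b hb hab
    rw [Prod.mk.injEq] at hab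
    rw [hmT a (mem_Ioc.1 ha).1, hmT b (mem_Ioc.1 hb).1, hab.1, hab.2]
  have hmem : ∀ n ∈ Ioc 0 N, (m n, T n) ∈
      {m ∈ Ioc 0 N | S m} ×ˢ ({p ∈ Ioc 0 N | P p} : Finset ℕ).powerset := by
    intro n hn
    rw [mem_Ioc] at hn
    have hdvd : ∀ d, d ∣ n → d ∈ Ioc 0 N := fun d hd ↦
      mem_Ioc.2 ⟨Nat.pos_of_dvd_of_pos hd hn.1, (Nat.le_of_dvd hn.1 hd).trans hn.2⟩
    refine mem_product.2 ⟨mem_filter.2 ⟨hdvd _ ⟨_, hmT n hn.1⟩, hm n hn.1⟩,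
      mem_powerset.2 fun p hp ↦ mem_filter.2 ⟨hdvd p ?_, hT n hn.1 p hp⟩⟩
    rw [hmT n hn.1]
    exact (dvd_prod_of_mem id hp).mul_left _
  rw [prod_one_add, sum_mul_sum, ← sum_product']
  calc ∑ n ∈ Ioc 0 N, (n : ℝ)⁻¹
      = ∑ n ∈ Ioc 0 N, (m n : ℝ)⁻¹ * ∏ p ∈ T n, (p : ℝ)⁻¹ := by
        refine sum_congr rfl fun n hn ↦ ?_
        conv_lhs => rw [hmT n (mem_Ioc.1 hn).1]
        rw [Nat.cast_mul, Nat.cast_prod, mul_inv, prod_inv_distrib]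
    _ = ∑ z ∈ (Ioc 0 N).image fun n ↦ (m n, T n), (z.1 : ℝ)⁻¹ * ∏ p ∈ z.2, (p : ℝ)⁻¹ := by
        rw [sum_image hinj]
    _ ≤ _ := sum_le_sum_of_subset_of_nonneg (image_subset_iff.2 hmem)
        fun z _ _ ↦ by positivity

/-- The predicate that `n` is a sum of two squares of integers; it defines the set `S` of the
paper. -/
def IsSumOfTwoSquares (n : ℕ) : Prop := ∃ a b : ℤ, a ^ 2 + b ^ 2 = (n : ℤ)

namespace IsSumOfTwoSquares

theorem mul {m n : ℕ} (hm : IsSumOfTwoSquares m) (hn : IsSumOfTwoSquares n) :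
    IsSumOfTwoSquares (m * n) := by
  obtain ⟨a, b, hab⟩ := hm
  obtain ⟨c, d, hcd⟩ := hn
  refine ⟨a * c - b * d, a * d + b * c, ?_⟩
  rw [Nat.cast_mul, ← hab, ← hcd]
  ring

theorem sq (n : ℕ) : IsSumOfTwoSquares (n ^ 2) := ⟨n, 0, by simp⟩

theorem of_prime {p : ℕ} (hp : p.Prime) (h : p % 4 ≠ 3) : IsSumOfTwoSquares p := by
  have := Fact.mk hp
  obtain ⟨a, b, hab⟩ := Nat.Prime.sq_add_sq h
  exact ⟨a, b, by exact_mod_cast hab⟩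

end IsSumOfTwoSquares

theorem exists_isSumOfTwoSquares_mul_prod {n : ℕ} (hn : 0 < n) :
    ∃ m, ∃ T : Finset ℕ, IsSumOfTwoSquares m ∧ (∀ p ∈ T, p.Prime ∧ p % 4 = 3) ∧
      n = m * ∏ p ∈ T, p := by
  obtain ⟨a, b, rfl, ha⟩ := Nat.sq_mul_squarefree n
  refine ⟨b ^ 2 * ∏ p ∈ a.primeFactors with p % 4 ≠ 3, p, {p ∈ a.primeFactors | p % 4 = 3},
    (IsSumOfTwoSquares.sq b).mul ?_, fun p hp ↦ ?_, ?_⟩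
  · refine prod_induction _ _ (fun _ _ ↦ IsSumOfTwoSquares.mul) ⟨1, 0, by simp⟩ fun p hp ↦ ?_
    rw [mem_filter] at hp
    exact .of_prime (Nat.prime_of_mem_primeFactors hp.1) hp.2
  · rw [mem_filter] at hp
    exact ⟨Nat.prime_of_mem_primeFactors hp.1, hp.2⟩
  · rw [mul_assoc, mul_comm (∏ p ∈ _ with _ ≠ _, p), prod_filter_mul_prod_filter_not,
      Nat.prod_primeFactors_of_squarefree ha]

open scoped Classical in
theorem exists_rpow_log_le_sum_inv_isSumOfTwoSquares : ∃ c > 0, ∀ N : ℕ, 2 ≤ N →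
    c * Real.log N ^ (1 / 2 : ℝ) ≤ ∑ m ∈ Ioc 0 N with IsSumOfTwoSquares m, (m : ℝ)⁻¹ := by
  obtain ⟨C, hC⟩ := exists_sum_inv_primes_mod_four_le (a := 3) (.inr rfl)
  refine ⟨Real.exp (-C), Real.exp_pos _, fun N hN ↦ ?_⟩
  have hlog : 0 < Real.log N := Real.log_pos (by exact_mod_cast hN)
  set T := ∑ m ∈ Ioc 0 N with IsSumOfTwoSquares m, (m : ℝ)⁻¹
  have hprod : ∏ p ∈ Ioc 0 N with p.Prime ∧ p % 4 = 3, (1 + (p : ℝ)⁻¹) ≤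
      Real.log N ^ (1 / 2 : ℝ) * Real.exp C := by
    calc ∏ p ∈ Ioc 0 N with p.Prime ∧ p % 4 = 3, (1 + (p : ℝ)⁻¹)
        ≤ Real.exp (∑ p ∈ Ioc 0 N with p.Prime ∧ p % 4 = 3, (p : ℝ)⁻¹) :=
          Real.prod_one_add_le_exp_sum _ fun p ↦ by positivity
      _ ≤ Real.exp (1 / 2 * Real.log (Real.log N) + C) := Real.exp_le_exp.2 (hC N hN)
      _ = Real.log N ^ (1 / 2 : ℝ) * Real.exp C := by
          rw [Real.exp_add, Real.rpow_def_of_pos hlog, mul_comm (1 / 2 : ℝ)]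
  have hharmonic : Real.log N ≤ T * (Real.log N ^ (1 / 2 : ℝ) * Real.exp C) := by
    calc Real.log N ≤ Real.log (N + 1 : ℕ) := Real.log_le_log (by positivity) (by simp)
      _ ≤ ∑ n ∈ Ioc 0 N, (n : ℝ)⁻¹ := by
          have := log_add_one_le_harmonic N
          rw [harmonic_eq_sum_Icc, show Icc 1 N = Ioc 0 N from rfl] at this
          push_cast at this ⊢
          exact this
      _ ≤ T * ∏ p ∈ Ioc 0 N with p.Prime ∧ p % 4 = 3, (1 + (p : ℝ)⁻¹) :=
          sum_inv_le_sum_inv_mul_prod_one_add_inv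
            (fun n hn ↦ exists_isSumOfTwoSquares_mul_prod hn) N
      _ ≤ T * (Real.log N ^ (1 / 2 : ℝ) * Real.exp C) := by
          gcongr
  have hsqrt : Real.log N = Real.log N ^ (1 / 2 : ℝ) * Real.log N ^ (1 / 2 : ℝ) := by
    rw [← Real.rpow_add hlog, add_halves, Real.rpow_one]
  rw [Real.exp_neg, ← div_eq_inv_mul, div_le_iff₀ (Real.exp_pos _)]
  refine le_of_mul_le_mul_left ?_ (Real.rpow_pos_of_pos hlog (1 / 2))
  linarith

theorem sum_sum_log_prime_le_sum_log {S P : ℕ → Prop} [DecidablePred S] [DecidablePred P]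
    (hSP : ∀ m p, S m → p.Prime → P p → S (m * p)) (N : ℕ) :
    ∑ m ∈ Ioc 0 N with S m, ∑ p ∈ Ioc 0 (N / m) with p.Prime ∧ P p, Real.log p ≤
      ∑ n ∈ Ioc 0 N with S n, Real.log n := by
  set f : ℕ → ℕ → ℝ := fun m p ↦ if S m then if p.Prime ∧ P p then Real.log p else 0 else 0
  have hf : ∀ m p, f m p ≤ Λ p := by
    intro m p
    simp only [f]
    split_ifs with _ hp
    · rw [vonMangoldt_apply_prime hp.1]
    all_goals exact vonMangoldt_nonneg
  have hterm : ∀ n, ∑ x ∈ n.divisorsAntidiagonal, f x.1 x.2 ≤ if S n then Real.log n else 0 := by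
    intro n
    split_ifs with hn
    · rw [← vonMangoldt_sum, ← Nat.sum_divisorsAntidiagonal' fun _ d ↦ Λ d]
      exact sum_le_sum fun x _ ↦ hf x.1 x.2
    · refine (sum_eq_zero fun x hx ↦ ?_).le
      simp only [f]
      split_ifs with hx₁ hx₂
      · refine absurd ?_ hn
        rw [← (Nat.mem_divisorsAntidiagonal.1 hx).1]
        exact hSP _ _ hx₁ hx₂.1 hx₂.2
      all_goals rfl
  calc ∑ m ∈ Ioc 0 N with S m, ∑ p ∈ Ioc 0 (N / m) with p.Prime ∧ P p, Real.log p
      = ∑ n ∈ Ioc 0 N, ∑ x ∈ n.divisorsAntidiagonal, f x.1 x.2 := by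
        rw [sum_Ioc_sum_divisorsAntidiagonal, sum_filter]
        refine sum_congr rfl fun m _ ↦ ?_
        split_ifs with hm <;> simp [f, hm, sum_filter]
    _ ≤ ∑ n ∈ Ioc 0 N with S n, Real.log n := by
        rw [sum_filter]
        exact sum_le_sum fun n _ ↦ hterm n

theorem natCast_div_le_two_mul_natDiv {m n : ℕ} (hn : 0 < n) (hnm : n ≤ m) :
    (m : ℝ) / n ≤ 2 * (m / n : ℕ) := by
  have : (1 : ℝ) ≤ (m / n : ℕ) := by exact_mod_cast Nat.div_pos hnm hn
  linarith [natCast_div_lt_natDiv_add_one m n]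

theorem eventually_log_le_two_mul_log_natDiv {Y : ℕ} (hY : 0 < Y) :
    ∀ᶠ N : ℕ in atTop, Real.log N ≤ 2 * Real.log (N / Y : ℕ) := by
  filter_upwards [eventually_ge_atTop (4 * Y ^ 2)] with N hN
  have hYN : Y ≤ N := by nlinarith
  have h := natCast_div_le_two_mul_natDiv hY hYN
  have hY₀ : (0 : ℝ) < Y := Nat.cast_pos.2 hY
  have hN₀ : 4 * (Y : ℝ) ^ 2 ≤ N := by exact_mod_cast hN
  rw [← Nat.cast_two (R := ℝ), ← Real.log_pow]
  refine Real.log_le_log (by nlinarith) ?_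
  rw [div_le_iff₀ hY₀] at h
  by_contra! hlt
  nlinarith

open scoped Classical in
theorem exists_mul_sum_inv_le_sum_log_isSumOfTwoSquares : ∃ c > 0, ∃ Y > 0, ∀ N : ℕ,
    c * N * ∑ m ∈ Ioc 0 (N / Y) with IsSumOfTwoSquares m, (m : ℝ)⁻¹ ≤
      ∑ n ∈ Ioc 0 N with IsSumOfTwoSquares n, Real.log n := by
  obtain ⟨c, hc, Y, hY, hprime⟩ := exists_le_sum_log_primes_mod_four (a := 1) (.inl rfl)
  refine ⟨c / 2, half_pos hc, Y, hY, fun N ↦ ?_⟩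
  have hterm : ∀ m ∈ Ioc 0 (N / Y), c / 2 * N * (m : ℝ)⁻¹ ≤
      ∑ p ∈ Ioc 0 (N / m) with p.Prime ∧ p % 4 = 1, Real.log p := by
    intro m hm
    rw [mem_Ioc, Nat.le_div_iff_mul_le hY] at hm
    have hYm : Y ≤ N / m := (Nat.le_div_iff_mul_le hm.1).2 (by rw [mul_comm]; exact hm.2)
    have hmN : m ≤ N := (Nat.le_mul_of_pos_right m hY).trans hm.2
    calc c / 2 * N * (m : ℝ)⁻¹ = c / 2 * (N / m) := by ring
      _ ≤ c / 2 * (2 * (N / m : ℕ)) := by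
          gcongr
          exact natCast_div_le_two_mul_natDiv hm.1 hmN
      _ = c * (N / m : ℕ) := by ring
      _ ≤ _ := hprime _ hYm
  calc c / 2 * N * ∑ m ∈ Ioc 0 (N / Y) with IsSumOfTwoSquares m, (m : ℝ)⁻¹
      ≤ ∑ m ∈ Ioc 0 (N / Y) with IsSumOfTwoSquares m,
          ∑ p ∈ Ioc 0 (N / m) with p.Prime ∧ p % 4 = 1, Real.log p := by
        rw [mul_sum]
        exact sum_le_sum fun m hm ↦ hterm m (mem_filter.1 hm).1
    _ ≤ ∑ m ∈ Ioc 0 N with IsSumOfTwoSquares m,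
          ∑ p ∈ Ioc 0 (N / m) with p.Prime ∧ p % 4 = 1, Real.log p :=
        sum_le_sum_of_subset_of_nonneg
          (filter_subset_filter _ (Ioc_subset_Ioc_right (N.div_le_self Y)))
          fun m _ _ ↦ sum_nonneg fun p _ ↦ Real.log_natCast_nonneg p
    _ ≤ ∑ n ∈ Ioc 0 N with IsSumOfTwoSquares n, Real.log n :=
        sum_sum_log_prime_le_sum_log
          (fun m p hm hp hp₁ ↦ hm.mul (.of_prime hp (by rw [hp₁]; norm_num))) N

open scoped Classical in
theorem exists_rpow_log_le_sum_log_isSumOfTwoSquares : ∃ c > 0, ∀ᶠ N : ℕ in atTop,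
    c * (N * Real.log N ^ (1 / 2 : ℝ)) ≤
      ∑ n ∈ Ioc 0 N with IsSumOfTwoSquares n, Real.log n := by
  obtain ⟨c₁, hc₁, Y, hY, hlog_sum⟩ := exists_mul_sum_inv_le_sum_log_isSumOfTwoSquares
  obtain ⟨c₂, hc₂, hinv_sum⟩ := exists_rpow_log_le_sum_inv_isSumOfTwoSquares
  refine ⟨c₁ * (c₂ * (1 / 2) ^ (1 / 2 : ℝ)), by positivity, ?_⟩
  filter_upwards [eventually_log_le_two_mul_log_natDiv hY, eventually_ge_atTop (2 * Y)]
    with N hlog hN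
  calc c₁ * (c₂ * (1 / 2) ^ (1 / 2 : ℝ)) * (N * Real.log N ^ (1 / 2 : ℝ))
      = c₁ * N * (c₂ * (1 / 2 * Real.log N) ^ (1 / 2 : ℝ)) := by
        rw [Real.mul_rpow (by norm_num) (Real.log_natCast_nonneg N)]
        ring
    _ ≤ c₁ * N * (c₂ * Real.log (N / Y : ℕ) ^ (1 / 2 : ℝ)) := by
        gcongr
        linarith
    _ ≤ c₁ * N * ∑ m ∈ Ioc 0 (N / Y) with IsSumOfTwoSquares m, (m : ℝ)⁻¹ := by
        gcongr
        exact hinv_sum _ ((Nat.le_div_iff_mul_le hY).2 hN)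
    _ ≤ ∑ n ∈ Ioc 0 N with IsSumOfTwoSquares n, Real.log n := hlog_sum N

theorem isBigO_ncard_isSumOfTwoSquares :
    (fun N : ℕ ↦ (N : ℝ) * Real.log N ^ (-1 / 2 : ℝ)) =O[atTop]
      fun N ↦ ({n | n ≤ N ∧ IsSumOfTwoSquares n}.ncard : ℝ) := by
  classical
  obtain ⟨c, hc, h⟩ := exists_rpow_log_le_sum_log_isSumOfTwoSquares
  refine .of_bound c⁻¹ ?_
  filter_upwards [h, eventually_ge_atTop 2] with N hN hN₂
  have hlog : 0 < Real.log N := Real.log_pos (by exact_mod_cast hN₂)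
  have hsub : (({n ∈ Ioc 0 N | IsSumOfTwoSquares n} : Finset ℕ) : Set ℕ) ⊆
      {n | n ≤ N ∧ IsSumOfTwoSquares n} := fun n hn ↦ by
    rw [mem_coe, mem_filter, mem_Ioc] at hn
    exact ⟨hn.1.2, hn.2⟩
  have hcard : #{n ∈ Ioc 0 N | IsSumOfTwoSquares n} ≤
      {n | n ≤ N ∧ IsSumOfTwoSquares n}.ncard := by
    rw [← Set.ncard_coe_finset]
    exact Set.ncard_le_ncard hsub ((Set.finite_le_nat N).subset fun n hn ↦ hn.1)
  rw [Real.norm_of_nonneg (by positivity), Real.norm_of_nonneg (Nat.cast_nonneg _),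
    ← div_eq_inv_mul, le_div_iff₀ hc]
  refine le_of_mul_le_mul_left ?_ hlog
  calc Real.log N * (N * Real.log N ^ (-1 / 2 : ℝ) * c)
      = c * (N * Real.log N ^ (1 / 2 : ℝ)) := by
        rw [show (1 / 2 : ℝ) = 1 + -1 / 2 by norm_num, Real.rpow_add hlog, Real.rpow_one]
        ring
    _ ≤ ∑ n ∈ Ioc 0 N with IsSumOfTwoSquares n, Real.log n := hN
    _ ≤ #{n ∈ Ioc 0 N | IsSumOfTwoSquares n} • Real.log N := by
        refine sum_le_card_nsmul _ _ _ fun n hn ↦ ?_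
        have hn := mem_Ioc.1 (mem_filter.1 hn).1
        exact Real.log_le_log (Nat.cast_pos.2 hn.1) (Nat.cast_le.2 hn.2)
    _ ≤ Real.log N * {n | n ≤ N ∧ IsSumOfTwoSquares n}.ncard := by
        rw [nsmul_eq_mul, mul_comm]
        gcongr

/-! ### The Hall–Tenenbaum inequality -/

theorem mul_log_le_sum_divisorsAntidiagonal_isPrimePow {g : ArithmeticFunction ℝ}
    (hg : g.IsMultiplicative) (hg₀ : ∀ n, 0 ≤ g n) (n : ℕ) :
    g n * Real.log n ≤ ∑ x ∈ n.divisorsAntidiagonal,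
      g x.1 * if IsPrimePow x.2 then g x.2 * Real.log x.2 else 0 := by
  rcases eq_or_ne n 0 with rfl | hn
  · simp
  let split (p : ℕ) : ℕ × ℕ := (ordCompl[p] n, ordProj[p] n)
  have hinj : Set.InjOn split n.primeFactors := by
    intro p hp q hq hpq
    rw [mem_coe, Nat.mem_primeFactors] at hp hq
    have hpow : p ^ n.factorization p = q ^ n.factorization q := congrArg Prod.snd hpq
    have hpv := (hp.1.factorization_pos_of_dvd hn hp.2.1).ne'
    exact (Nat.prime_dvd_prime_iff_eq hp.1 hq.1).1
      (hp.1.dvd_of_dvd_pow (hpow ▸ dvd_pow_self p hpv))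
  calc g n * Real.log n = ∑ p ∈ n.primeFactors, g n * Real.log (ordProj[p] n : ℕ) := by
        rw [Real.log_nat_eq_sum_factorization, Finsupp.sum, mul_sum, Nat.support_factorization]
        simp only [Nat.cast_pow, Real.log_pow]
    _ = ∑ p ∈ n.primeFactors, g (split p).1 *
          if IsPrimePow (split p).2 then g (split p).2 * Real.log (split p).2 else 0 := by
        refine sum_congr rfl fun p hp ↦ ?_
        rw [Nat.mem_primeFactors] at hp
        have hpow : IsPrimePow (split p).2 :=
          hp.1.isPrimePow.pow (hp.1.factorization_pos_of_dvd hn hp.2.1).ne'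
        have hcop : (split p).1.Coprime (split p).2 :=
          ((Nat.coprime_ordCompl hp.1 hn).pow_left _).symm
        rw [if_pos hpow, ← mul_assoc, ← hg.map_mul_of_coprime hcop, mul_comm (split p).1,
          Nat.ordProj_mul_ordCompl_eq_self]
    _ = ∑ x ∈ n.primeFactors.image split,
          g x.1 * if IsPrimePow x.2 then g x.2 * Real.log x.2 else 0 := by rw [sum_image hinj]
    _ ≤ _ := by
        refine sum_le_sum_of_subset_of_nonneg (fun x hx ↦ ?_) fun x _ _ ↦
          mul_nonneg (hg₀ _) ?_
        · obtain ⟨p, -, rfl⟩ := mem_image.1 hx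
          rw [Nat.mem_divisorsAntidiagonal, mul_comm]
          exact ⟨Nat.ordProj_mul_ordCompl_eq_self n p, hn⟩
        · split_ifs
          exacts [mul_nonneg (hg₀ _) (Real.log_natCast_nonneg _), le_rfl]

theorem sum_mul_log_le_mul_sum_div {g : ArithmeticFunction ℝ} (hg : g.IsMultiplicative)
    (hg₀ : ∀ n, 0 ≤ g n) {A : ℝ}
    (hA : ∀ y : ℕ, ∑ q ∈ Ioc 0 y with IsPrimePow q, g q * Real.log q ≤ A * y) (N : ℕ) :
    (∑ n ∈ Ioc 0 N, g n) * Real.log N ≤ (A + 1) * N * ∑ m ∈ Ioc 0 N, g m / m := by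
  have hlog : ∑ n ∈ Ioc 0 N, g n * Real.log n ≤ A * N * ∑ m ∈ Ioc 0 N, g m / m :=
    calc ∑ n ∈ Ioc 0 N, g n * Real.log n
        ≤ ∑ n ∈ Ioc 0 N, ∑ x ∈ n.divisorsAntidiagonal,
            g x.1 * if IsPrimePow x.2 then g x.2 * Real.log x.2 else 0 :=
          sum_le_sum fun n _ ↦ mul_log_le_sum_divisorsAntidiagonal_isPrimePow hg hg₀ n
      _ = ∑ m ∈ Ioc 0 N, g m * ∑ q ∈ Ioc 0 (N / m) with IsPrimePow q, g q * Real.log q := by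
          rw [sum_Ioc_sum_divisorsAntidiagonal fun m q ↦
            g m * if IsPrimePow q then g q * Real.log q else 0]
          simp only [mul_sum, sum_filter, mul_ite, mul_zero]
      _ ≤ ∑ m ∈ Ioc 0 N, g m * (A * (N / m : ℕ)) := by
          gcongr with m
          exacts [hg₀ m, hA _]
      _ ≤ ∑ m ∈ Ioc 0 N, g m * (A * (N / m)) := by
          have hA₀ : 0 ≤ A := by simpa using (sum_nonneg fun q _ ↦
            mul_nonneg (hg₀ q) (Real.log_natCast_nonneg q)).trans (hA 1)
          gcongr with m
          exacts [hg₀ m, Nat.cast_div_le]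
      _ = A * N * ∑ m ∈ Ioc 0 N, g m / m := by
          rw [mul_sum]
          exact sum_congr rfl fun m _ ↦ by ring
  have hdiff : ∑ n ∈ Ioc 0 N, g n * (Real.log N - Real.log n) ≤ N * ∑ m ∈ Ioc 0 N, g m / m := by
    rw [mul_sum]
    refine sum_le_sum fun n hn ↦ ?_
    have hn₀ : (0 : ℝ) < n := Nat.cast_pos.2 (mem_Ioc.1 hn).1
    have hN₀ : (0 : ℝ) < N := hn₀.trans_le (Nat.cast_le.2 (mem_Ioc.1 hn).2)
    rw [← Real.log_div hN₀.ne' hn₀.ne', mul_div_left_comm]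
    exact mul_le_mul_of_nonneg_left (Real.log_le_self (by positivity)) (hg₀ n)
  calc (∑ n ∈ Ioc 0 N, g n) * Real.log N
      = ∑ n ∈ Ioc 0 N, g n * Real.log n + ∑ n ∈ Ioc 0 N, g n * (Real.log N - Real.log n) := by
        rw [sum_mul, ← sum_add_distrib]
        exact sum_congr rfl fun n _ ↦ by ring
    _ ≤ (A + 1) * N * ∑ m ∈ Ioc 0 N, g m / m := by linarith

section PrimePowers

variable {g : ℕ → ℝ} (hg : ∀ p a : ℕ, p.Prime → g (p ^ a) ≤ a + 1)
include hg

theorem mul_log_le_mul_sqrt_mul_vonMangoldt {q : ℕ} (hq : IsPrimePow q) :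
    g q * Real.log q ≤ 2 * (4 / Real.log 2) ^ 2 * √q * Λ q := by
  obtain ⟨p, a, hp, ha, rfl⟩ := (isPrimePow_nat_iff q).1 hq
  have hlog₂ : 0 < Real.log 2 := Real.log_pos one_lt_two
  have hq₀ : (0 : ℝ) < (p ^ a : ℕ) := by exact_mod_cast hq.pos
  have ha₁ : (1 : ℝ) ≤ a := by exact_mod_cast ha
  have hexp : (a : ℝ) ≤ 4 / Real.log 2 * ((p ^ a : ℕ) : ℝ) ^ (1 / 4 : ℝ) := by
    have hle : a * Real.log 2 ≤ Real.log (p ^ a : ℕ) := by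
      rw [Nat.cast_pow, Real.log_pow]
      gcongr
      exact_mod_cast hp.two_le
    have hrpow := Real.log_le_rpow_div hq₀.le (show (0 : ℝ) < 1 / 4 by norm_num)
    rw [div_mul_eq_mul_div, le_div_iff₀ hlog₂]
    linarith
  have hΛ : Λ (p ^ a) = Real.log p := by
    rw [vonMangoldt_apply_pow ha.ne', vonMangoldt_apply_prime hp]
  have hΛ₀ := Real.log_natCast_nonneg p
  calc g (p ^ a) * Real.log (p ^ a : ℕ) ≤ (a + 1) * (a * Real.log p) := by
        rw [Nat.cast_pow, Real.log_pow]
        gcongr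
        exact hg p a hp
    _ ≤ 2 * (a : ℝ) ^ 2 * Real.log p := by nlinarith [mul_nonneg (sub_nonneg.2 ha₁) hΛ₀]
    _ ≤ 2 * (4 / Real.log 2 * ((p ^ a : ℕ) : ℝ) ^ (1 / 4 : ℝ)) ^ 2 * Real.log p := by gcongr
    _ = 2 * (4 / Real.log 2) ^ 2 * √(p ^ a : ℕ) * Λ (p ^ a) := by
        rw [hΛ, mul_pow, ← Real.rpow_natCast (_ ^ _), ← Real.rpow_mul hq₀.le, Real.sqrt_eq_rpow,
          ← mul_assoc]
        norm_num

theorem exists_sum_isPrimePow_mul_log_le :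
    ∃ A, 0 ≤ A ∧ ∀ y : ℕ, ∑ q ∈ Ioc 0 y with IsPrimePow q, g q * Real.log q ≤ A * y := by
  obtain ⟨C, hC⟩ := Chebyshev.psi_sub_theta_le_mul_sqrt
  set B : ℝ := 2 * (4 / Real.log 2) ^ 2
  have hC₀ : 0 ≤ C := by simpa using hC 1
  refine ⟨2 * (Real.log 4 + 4) + B * C, by positivity, fun y ↦ ?_⟩
  have hterm : ∀ q ∈ Ioc 0 y, (if IsPrimePow q then g q * Real.log q else 0) ≤
      2 * Λ q + B * √y * if q.Prime then 0 else Λ q := by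
    intro q hq
    have hsqrt : √(q : ℝ) ≤ √y := Real.sqrt_le_sqrt (Nat.cast_le.2 (mem_Ioc.1 hq).2)
    split_ifs with hpow hprime hprime
    · rw [vonMangoldt_apply_prime hprime, mul_zero, add_zero]
      gcongr
      simpa [one_add_one_eq_two] using hg q 1 hprime
    · calc g q * Real.log q ≤ B * √q * Λ q := mul_log_le_mul_sqrt_mul_vonMangoldt hg hpow
        _ ≤ 2 * Λ q + B * √y * Λ q :=
          le_add_of_nonneg_of_le (mul_nonneg zero_le_two vonMangoldt_nonneg) (by gcongr)
    · exact add_nonneg (mul_nonneg zero_le_two vonMangoldt_nonneg) (by simp)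
    · exact add_nonneg (mul_nonneg zero_le_two vonMangoldt_nonneg)
        (mul_nonneg (by positivity) vonMangoldt_nonneg)
  have hnonprime : ∑ q ∈ Ioc 0 y, (if q.Prime then 0 else Λ q) ≤ C * √y := by
    refine le_of_eq_of_le ?_ (hC y)
    rw [Chebyshev.psi_sub_theta_eq_sum_not_prime, Nat.floor_natCast, sum_filter]
    simp only [ite_not]
  calc ∑ q ∈ Ioc 0 y with IsPrimePow q, g q * Real.log q
      ≤ 2 * ∑ q ∈ Ioc 0 y, Λ q + B * √y * ∑ q ∈ Ioc 0 y, if q.Prime then 0 else Λ q := by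
        rw [sum_filter, mul_sum, mul_sum, ← sum_add_distrib]
        exact sum_le_sum hterm
    _ ≤ 2 * ((Real.log 4 + 4) * y) + B * √y * (C * √y) := by
        gcongr
        exact sum_vonMangoldt_le y
    _ = (2 * (Real.log 4 + 4) + B * C) * y := by
        linear_combination B * C * Real.mul_self_sqrt (Nat.cast_nonneg y)

end PrimePowers

theorem sum_Ioc_le_prod_primes_tsum {f : ℕ → ℝ} (hf₀ : ∀ n, 0 ≤ f n) (hf₁ : f 1 = 1)
    (hmul : ∀ {m n : ℕ}, m.Coprime n → f (m * n) = f m * f n)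
    (hsum : ∀ p : ℕ, p.Prime → Summable fun a ↦ f (p ^ a)) (N : ℕ) :
    ∑ m ∈ Ioc 0 N, f m ≤ ∏ p ∈ Ioc 0 N with p.Prime, ∑' a, f (p ^ a) := by
  have hprod := (EulerProduct.summable_and_hasSum_smoothNumbers_prod_primesBelow_tsum hf₁ hmul
    (fun {p} hp ↦ by simpa only [Real.norm_of_nonneg (hf₀ _)] using hsum p hp) (N + 1)).2
  have hprimes : (N + 1).primesBelow = {p ∈ Ioc 0 N | p.Prime} := by
    ext p
    simp only [Nat.mem_primesBelow, mem_filter, mem_Ioc, Order.lt_add_one_iff]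
    exact ⟨fun h ↦ ⟨⟨h.2.pos, h.1⟩, h.2⟩, fun h ↦ ⟨h.1.2, h.2⟩⟩
  have hmem : ∀ m ∈ Ioc 0 N, m ∈ (N + 1).smoothNumbers := fun m hm ↦ by
    rw [mem_Ioc] at hm
    rw [Nat.mem_smoothNumbers_iff_forall_le]
    exact ⟨hm.1.ne', fun p hp _ _ ↦ by lia⟩
  calc ∑ m ∈ Ioc 0 N, f m = ∑ m ∈ Ioc 0 N, Set.indicator (N + 1).smoothNumbers f m :=
        sum_congr rfl fun m hm ↦ (Set.indicator_of_mem (hmem m hm) f).symm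
    _ ≤ ∑' m, Set.indicator (N + 1).smoothNumbers f m :=
        (summable_subtype_iff_indicator.1 hprod.summable).sum_le_tsum _
          fun n _ ↦ Set.indicator_nonneg (fun m _ ↦ hf₀ m) n
    _ = ∏ p ∈ Ioc 0 N with p.Prime, ∑' a, f (p ^ a) := by
        rw [← _root_.tsum_subtype, hprod.tsum_eq, hprimes]

theorem exists_tsum_pow_div_pow_le_exp {g : ℕ → ℝ} (hg₀ : ∀ n, 0 ≤ g n) (hg₁ : g 1 = 1)
    (hg : ∀ p a : ℕ, p.Prime → g (p ^ a) ≤ a + 1) :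
    ∃ V, 0 ≤ V ∧ ∀ p : ℕ, p.Prime → (Summable fun a : ℕ ↦ g (p ^ a) / (p ^ a : ℕ)) ∧
      ∑' a : ℕ, g (p ^ a) / (p ^ a : ℕ) ≤ Real.exp (g p / p + V * ((p : ℝ) ^ 2)⁻¹) := by
  have hgeom : Summable fun a : ℕ ↦ ((a : ℝ) + 3) * (1 / 2) ^ a := by
    have h₁ := summable_pow_mul_geometric_of_norm_lt_one 1 (r := (1 / 2 : ℝ)) (by norm_num)
    refine (h₁.add (summable_geometric_two.mul_left 3)).congr fun a ↦ ?_
    rw [pow_one, add_mul]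
  refine ⟨∑' a : ℕ, ((a : ℝ) + 3) * (1 / 2) ^ a, tsum_nonneg fun a ↦ by positivity,
    fun p hp ↦ ?_⟩
  have hp₂ : (2 : ℝ) ≤ p := by exact_mod_cast hp.two_le
  have htail : ∀ a : ℕ, g (p ^ (a + 2)) / (p ^ (a + 2) : ℕ) ≤
      ((a : ℝ) + 3) * (1 / 2) ^ a * ((p : ℝ) ^ 2)⁻¹ := fun a ↦
    calc g (p ^ (a + 2)) / (p ^ (a + 2) : ℕ) ≤ ((a : ℝ) + 3) / (2 ^ a * (p : ℝ) ^ 2) := by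
          rw [Nat.cast_pow, pow_add (p : ℝ)]
          gcongr
          refine (hg p (a + 2) hp).trans_eq ?_
          push_cast
          ring
      _ = ((a : ℝ) + 3) * (1 / 2) ^ a * ((p : ℝ) ^ 2)⁻¹ := by
          rw [one_div_pow]
          field_simp
  have hsum_tail := Summable.of_nonneg_of_le (fun a ↦ div_nonneg (hg₀ _) (Nat.cast_nonneg _))
    htail (hgeom.mul_right _)
  have hsum := (summable_nat_add_iff (f := fun a ↦ g (p ^ a) / (p ^ a : ℕ)) 2).1 hsum_tail
  refine ⟨hsum, ?_⟩
  calc ∑' a : ℕ, g (p ^ a) / (p ^ a : ℕ)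
      = 1 + g p / p + ∑' a : ℕ, g (p ^ (a + 2)) / (p ^ (a + 2) : ℕ) := by
        rw [← hsum.sum_add_tsum_nat_add 2]
        simp [sum_range_succ, hg₁]
    _ ≤ 1 + g p / p + (∑' a : ℕ, ((a : ℝ) + 3) * (1 / 2) ^ a) * ((p : ℝ) ^ 2)⁻¹ := by
        rw [← tsum_mul_right]
        exact add_le_add le_rfl (hsum_tail.tsum_le_tsum htail (hgeom.mul_right _))
    _ ≤ _ := by
        rw [add_assoc, add_comm]
        exact Real.add_one_le_exp _

theorem exists_sum_div_le_exp_sum_prime_div {g : ArithmeticFunction ℝ} (hg : g.IsMultiplicative)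
    (hg₀ : ∀ n, 0 ≤ g n) (hgpow : ∀ p a : ℕ, p.Prime → g (p ^ a) ≤ a + 1) :
    ∃ C, 0 ≤ C ∧ ∀ N : ℕ, ∑ m ∈ Ioc 0 N, g m / m ≤
      C * Real.exp (∑ p ∈ Ioc 0 N with p.Prime, g p / p) := by
  obtain ⟨V, hV, hlocal⟩ := exists_tsum_pow_div_pow_le_exp hg₀ hg.map_one hgpow
  have hsq : Summable fun p : ℕ ↦ ((p : ℝ) ^ 2)⁻¹ := Real.summable_nat_pow_inv.2 one_lt_two
  refine ⟨Real.exp (V * ∑' p : ℕ, ((p : ℝ) ^ 2)⁻¹), (Real.exp_pos _).le, fun N ↦ ?_⟩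
  calc ∑ m ∈ Ioc 0 N, g m / m
      ≤ ∏ p ∈ Ioc 0 N with p.Prime, ∑' a : ℕ, g (p ^ a) / (p ^ a : ℕ) := by
        refine sum_Ioc_le_prod_primes_tsum (fun n ↦ div_nonneg (hg₀ n) n.cast_nonneg)
          (by simp [hg.map_one]) (fun {m n} hmn ↦ ?_) (fun p hp ↦ (hlocal p hp).1) N
        rw [hg.map_mul_of_coprime hmn, Nat.cast_mul, mul_div_mul_comm]
    _ ≤ ∏ p ∈ Ioc 0 N with p.Prime, Real.exp (g p / p + V * ((p : ℝ) ^ 2)⁻¹) :=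
        prod_le_prod (fun p _ ↦ tsum_nonneg fun a ↦ div_nonneg (hg₀ _) (Nat.cast_nonneg _))
          fun p hp ↦ (hlocal p (mem_filter.1 hp).2).2
    _ = Real.exp (V * ∑ p ∈ Ioc 0 N with p.Prime, ((p : ℝ) ^ 2)⁻¹) *
          Real.exp (∑ p ∈ Ioc 0 N with p.Prime, g p / p) := by
        rw [← Real.exp_sum, ← Real.exp_add, sum_add_distrib, mul_sum, add_comm]
    _ ≤ _ := by
        gcongr
        exact hsq.sum_le_tsum _ fun p _ ↦ by positivity

theorem sum_prime_div_le {g : ℕ → ℝ} {κ : ℝ} (hg₂ : g 2 ≤ 2)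
    (hg_one : ∀ p : ℕ, p.Prime → p % 4 = 1 → g p ≤ κ)
    (hg_three : ∀ p : ℕ, p.Prime → p % 4 = 3 → g p = 0) (N : ℕ) :
    ∑ p ∈ Ioc 0 N with p.Prime, g p / p ≤
      1 + κ * ∑ p ∈ Ioc 0 N with p.Prime ∧ p % 4 = 1, (p : ℝ)⁻¹ := by
  have hterm : ∀ p ∈ Ioc 0 N, (if p.Prime then g p / p else 0) ≤
      (if p = 2 then 1 else 0) + κ * if p.Prime ∧ p % 4 = 1 then (p : ℝ)⁻¹ else 0 := by
    intro p _
    by_cases hp : p.Prime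
    · rcases hp.eq_two_or_odd with rfl | hodd
      · norm_num
        linarith
      · have hp₂ : p ≠ 2 := by lia
        rcases show p % 4 = 1 ∨ p % 4 = 3 by lia with hmod | hmod
        · simp only [hp, hmod, hp₂, and_self, if_true, if_false, zero_add, div_eq_mul_inv]
          gcongr
          exact hg_one p hp hmod
        · simp [hp, hmod, hp₂, hg_three p hp hmod]
    · simp only [hp, false_and, if_false, mul_zero, add_zero]
      split_ifs <;> norm_num
  calc ∑ p ∈ Ioc 0 N with p.Prime, g p / p
      ≤ ∑ p ∈ Ioc 0 N, (if p = 2 then 1 else 0) +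
          κ * ∑ p ∈ Ioc 0 N with p.Prime ∧ p % 4 = 1, (p : ℝ)⁻¹ := by
        rw [sum_filter, sum_filter, mul_sum, ← sum_add_distrib]
        exact sum_le_sum hterm
    _ ≤ _ := by
        gcongr
        rw [sum_ite_eq']
        split_ifs <;> norm_num

theorem isBigO_sum_of_prime_mod_four {g : ArithmeticFunction ℝ} (hg : g.IsMultiplicative)
    (hg₀ : ∀ n, 0 ≤ g n) (hgpow : ∀ p a : ℕ, p.Prime → g (p ^ a) ≤ a + 1) {κ : ℝ} (hκ : 0 ≤ κ)
    (hg_one : ∀ p : ℕ, p.Prime → p % 4 = 1 → g p ≤ κ)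
    (hg_three : ∀ p : ℕ, p.Prime → p % 4 = 3 → g p = 0) :
    (fun N : ℕ ↦ ∑ n ∈ Ioc 0 N, g n) =O[atTop]
      fun N : ℕ ↦ (N : ℝ) * Real.log N ^ (κ / 2 - 1) := by
  obtain ⟨A, hA₀, hA⟩ := exists_sum_isPrimePow_mul_log_le hgpow
  obtain ⟨C, hC₀, hC⟩ := exists_sum_div_le_exp_sum_prime_div hg hg₀ hgpow
  obtain ⟨D, hD⟩ := exists_sum_inv_primes_mod_four_le (Or.inl rfl)
  have hg₂ : g 2 ≤ 2 := by simpa [one_add_one_eq_two] using hgpow 2 1 Nat.prime_two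
  refine .of_bound ((A + 1) * (C * Real.exp (1 + κ * D))) ?_
  filter_upwards [eventually_ge_atTop 2] with N hN
  have hlog : 0 < Real.log N := Real.log_pos (by exact_mod_cast hN)
  rw [Real.norm_of_nonneg (sum_nonneg fun n _ ↦ hg₀ n), Real.norm_of_nonneg (by positivity)]
  refine le_of_mul_le_mul_right ?_ hlog
  calc (∑ n ∈ Ioc 0 N, g n) * Real.log N
      ≤ (A + 1) * N * ∑ m ∈ Ioc 0 N, g m / m := sum_mul_log_le_mul_sum_div hg hg₀ hA N
    _ ≤ (A + 1) * N * (C * Real.exp (1 + κ * (1 / 2 * Real.log (Real.log N) + D))) := by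
        grw [hC N, sum_prime_div_le hg₂ hg_one hg_three N, hD N hN]
    _ = (A + 1) * (C * Real.exp (1 + κ * D)) * (N * Real.log N ^ (κ / 2 - 1)) * Real.log N := by
        rw [Real.rpow_sub_one hlog.ne', Real.rpow_def_of_pos hlog,
          show 1 + κ * (1 / 2 * Real.log (Real.log N) + D) =
            1 + κ * D + Real.log (Real.log N) * (κ / 2) by ring, Real.exp_add]
        field_simp

/-! ### Gaussian integers of given norm -/

theorem natAbs_norm_mul (z w : GaussianInt) :
    (z * w).norm.natAbs = z.norm.natAbs * w.norm.natAbs := by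
  rw [Zsqrtd.norm_mul, Int.natAbs_mul]

theorem natAbs_norm_pow (z : GaussianInt) (k : ℕ) :
    (z ^ k).norm.natAbs = z.norm.natAbs ^ k :=
  map_pow (Int.natAbsHom.toMonoidHom.comp Zsqrtd.normMonoidHom) z k

theorem natAbs_norm_eq_iff {z : GaussianInt} {n : ℕ} :
    z.norm.natAbs = n ↔ z.re ^ 2 + z.im ^ 2 = (n : ℤ) := by
  rw [← Int.natCast_inj, GaussianInt.abs_natCast_norm, Zsqrtd.norm_def]
  ring_nf

theorem dvd_natAbs_norm (z : GaussianInt) : z ∣ (z.norm.natAbs : GaussianInt) := by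
  rw [GaussianInt.natCast_natAbs_norm, Zsqrtd.norm_eq_mul_conj]
  exact dvd_mul_right z _

theorem natAbs_norm_dvd_sq {z : GaussianInt} {n : ℕ} (h : z ∣ (n : GaussianInt)) :
    z.norm.natAbs ∣ n ^ 2 := by
  obtain ⟨w, hw⟩ := h
  refine ⟨w.norm.natAbs, ?_⟩
  rw [← natAbs_norm_mul, ← hw, Zsqrtd.norm_natCast, ← Nat.cast_mul, Int.natAbs_natCast, sq]

theorem isCoprime_of_coprime_natAbs_norm {z w : GaussianInt}
    (h : z.norm.natAbs.Coprime w.norm.natAbs) : IsCoprime z w :=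
  (h.cast.of_isCoprime_of_dvd_left (dvd_natAbs_norm z)).of_isCoprime_of_dvd_right
    (dvd_natAbs_norm w)

theorem exists_mul_eq_of_natAbs_norm_eq_mul {u : GaussianInt} {m n : ℕ} (hmn : m.Coprime n)
    (hu : u.norm.natAbs = m * n) :
    ∃ z w : GaussianInt, z.norm.natAbs = m ∧ w.norm.natAbs = n ∧ z * w = u := by
  have hdvd : u ∣ (m : GaussianInt) * n := by
    rw [← Nat.cast_mul, ← hu]
    exact dvd_natAbs_norm u
  obtain ⟨z, w, hz, hw, rfl⟩ := exists_dvd_and_dvd_of_dvd_mul hdvd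
  rw [natAbs_norm_mul] at hu
  have hzn : z.norm.natAbs.Coprime n :=
    (hmn.pow_left 2).coprime_dvd_left (natAbs_norm_dvd_sq hz)
  have hwm : w.norm.natAbs.Coprime m :=
    (hmn.symm.pow_left 2).coprime_dvd_left (natAbs_norm_dvd_sq hw)
  refine ⟨z, w, ?_, ?_, rfl⟩
  · exact Nat.dvd_antisymm (hzn.dvd_of_dvd_mul_right ⟨_, hu.symm⟩)
      (hwm.symm.dvd_of_dvd_mul_right ⟨_, hu⟩)
  · exact Nat.dvd_antisymm (hwm.dvd_of_dvd_mul_left (hu ▸ dvd_mul_left _ _))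
      (hzn.symm.dvd_of_dvd_mul_left (hu ▸ dvd_mul_left _ _))

/-- The Gaussian integers of norm `n` up to units; for `n ≠ 0` they correspond to the ideals of
`ℤ[i]` of norm `n`. -/
def associatesOfNorm (n : ℕ) : Set (Associates GaussianInt) :=
  Associates.mk '' {z | z.norm.natAbs = n}

theorem mk_mem_associatesOfNorm {z : GaussianInt} {n : ℕ} :
    Associates.mk z ∈ associatesOfNorm n ↔ z.norm.natAbs = n := by
  refine ⟨?_, fun hz ↦ ⟨z, hz, rfl⟩⟩
  rintro ⟨w, hw, hwz⟩
  rw [← Zsqrtd.norm_eq_of_associated (by norm_num) (Associates.mk_eq_mk_iff_associated.1 hwz)]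
  exact hw

theorem finite_associatesOfNorm {n : ℕ} (hn : n ≠ 0) : (associatesOfNorm n).Finite := by
  have hdivisors : Finite {c // c ∣ Associates.mk (n : GaussianInt)} :=
    (UniqueFactorizationMonoid.fintypeSubtypeDvd _
      (Associates.mk_ne_zero.2 (Nat.cast_ne_zero.2 hn))).finite
  refine (Set.finite_coe_iff.1 hdivisors).subset ?_
  rintro _ ⟨z, rfl, rfl⟩
  exact Associates.mk_dvd_mk.2 (dvd_natAbs_norm z)

theorem associatesOfNorm_one : associatesOfNorm 1 = {1} := by
  ext c
  obtain ⟨z, rfl⟩ := Associates.mk_surjective c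
  rw [mk_mem_associatesOfNorm, Zsqrtd.norm_eq_one_iff, Set.mem_singleton_iff,
    Associates.mk_eq_one]

theorem ncard_associatesOfNorm_mul {m n : ℕ} (hmn : m.Coprime n) :
    (associatesOfNorm (m * n)).ncard = (associatesOfNorm m).ncard * (associatesOfNorm n).ncard := by
  rw [← Set.ncard_prod]
  refine (Set.ncard_congr (fun c _ ↦ c.1 * c.2) ?_ ?_ ?_).symm
  · rintro ⟨_, _⟩ ⟨⟨z, hz, rfl⟩, w, hw, rfl⟩
    exact ⟨z * w, by rw [Set.mem_ofPred_eq, natAbs_norm_mul, hz, hw], rfl⟩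
  · rintro ⟨_, _⟩ ⟨_, _⟩ ⟨⟨z, hz, rfl⟩, w, hw, rfl⟩ ⟨⟨z', hz', rfl⟩, w', hw', rfl⟩ hzw
    have hassoc : Associated (z * w) (z' * w') := Associates.mk_eq_mk_iff_associated.1 hzw
    have hcop {x y : GaussianInt} (hx : x.norm.natAbs = m) (hy : y.norm.natAbs = n) :
        IsCoprime x y := isCoprime_of_coprime_natAbs_norm (by rwa [hx, hy])
    refine Prod.ext (Associates.mk_eq_mk_iff_associated.2 ?_)
      (Associates.mk_eq_mk_iff_associated.2 ?_)
    · exact associated_of_dvd_dvd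
        ((hcop hz hw').dvd_of_dvd_mul_right ((dvd_mul_right z w).trans hassoc.dvd))
        ((hcop hz' hw).dvd_of_dvd_mul_right ((dvd_mul_right z' w').trans hassoc.symm.dvd))
    · exact associated_of_dvd_dvd
        ((hcop hz' hw).symm.dvd_of_dvd_mul_left ((dvd_mul_left w z).trans hassoc.dvd))
        ((hcop hz hw').symm.dvd_of_dvd_mul_left ((dvd_mul_left w' z').trans hassoc.symm.dvd))
  · rintro _ ⟨u, hu, rfl⟩
    obtain ⟨z, w, hz, hw, rfl⟩ := exists_mul_eq_of_natAbs_norm_eq_mul hmn hu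
    exact ⟨(Associates.mk z, Associates.mk w), ⟨⟨z, hz, rfl⟩, w, hw, rfl⟩, rfl⟩

theorem exists_prime_natAbs_norm_eq_pow {p : ℕ} (hp : p.Prime) :
    ∃ π : GaussianInt, Prime π ∧ ∃ f ≠ 0, π.norm.natAbs = p ^ f := by
  have hp_unit : ¬IsUnit (p : GaussianInt) := by
    rw [← Zsqrtd.norm_eq_one_iff, Zsqrtd.norm_natCast, ← Nat.cast_mul, Int.natAbs_natCast]
    exact fun h ↦ hp.one_lt.ne' (Nat.eq_one_of_mul_eq_one_left h)
  obtain ⟨π, hπ, hdvd⟩ := WfDvdMonoid.exists_irreducible_factor hp_unit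
    (Nat.cast_ne_zero.2 hp.ne_zero)
  obtain ⟨f, -, hf⟩ := (Nat.dvd_prime_pow hp).1 (natAbs_norm_dvd_sq hdvd)
  refine ⟨π, hπ.prime, f, ?_, hf⟩
  rintro rfl
  exact hπ.not_isUnit (Zsqrtd.norm_eq_one_iff.1 hf)

theorem exists_associated_pow_mul_star_pow {p f : ℕ} (hf : f ≠ 0) {π : GaussianInt}
    (hπ : Prime π) (hnorm : π.norm.natAbs = p ^ f) {z : GaussianInt} {a : ℕ}
    (hz : z.norm.natAbs = p ^ a) : ∃ i j, Associated z (π ^ i * star π ^ j) := by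
  have hmul_star : π * star π = (p : GaussianInt) ^ f := by
    rw [← Zsqrtd.norm_eq_mul_conj, ← GaussianInt.natCast_natAbs_norm, hnorm, Nat.cast_pow]
  have hdvd : z ∣ π ^ a * star π ^ a := by
    rw [← mul_pow, hmul_star, ← pow_mul]
    refine (dvd_natAbs_norm z).trans ?_
    rw [hz, Nat.cast_pow]
    exact pow_dvd_pow _ (Nat.le_mul_of_pos_left a (Nat.pos_of_ne_zero hf))
  obtain ⟨x, y, hx, hy, rfl⟩ := exists_dvd_and_dvd_of_dvd_mul hdvd
  have hstar : Prime (star π) := (MulEquiv.prime_iff (starMulAut (R := GaussianInt))).2 hπ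
  obtain ⟨i, -, hi⟩ := (dvd_prime_pow hπ a).1 hx
  obtain ⟨j, -, hj⟩ := (dvd_prime_pow hstar a).1 hy
  exact ⟨i, j, hi.mul_mul hj⟩

theorem ncard_associatesOfNorm_prime_pow_le {p : ℕ} (hp : p.Prime) (a : ℕ) :
    (associatesOfNorm (p ^ a)).ncard ≤ a + 1 := by
  classical
  obtain ⟨π, hπ, f, hf, hnorm⟩ := exists_prime_natAbs_norm_eq_pow hp
  have hsub : associatesOfNorm (p ^ a) ⊆
      (range (a + 1)).image fun i ↦ Associates.mk (π ^ i * star π ^ (a / f - i)) := by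
    rintro _ ⟨z, hz, rfl⟩
    obtain ⟨i, j, hij⟩ := exists_associated_pow_mul_star_pow hf hπ hnorm hz
    have hpow : p ^ a = p ^ (f * (i + j)) := by
      rw [← hz, Zsqrtd.norm_eq_of_associated (by norm_num) hij, natAbs_norm_mul, natAbs_norm_pow,
        natAbs_norm_pow, Zsqrtd.norm_conj, hnorm, ← pow_add, ← pow_mul]
    have ha : a = f * (i + j) := Nat.pow_right_injective hp.two_le hpow
    rw [mem_coe, mem_image]
    refine ⟨i, ?_, ?_⟩
    · rw [mem_range]
      nlinarith [Nat.pos_of_ne_zero hf]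
    · rw [ha, Nat.mul_div_cancel_left _ (Nat.pos_of_ne_zero hf), add_tsub_cancel_left]
      exact (Associates.mk_eq_mk_iff_associated.2 hij).symm
  calc (associatesOfNorm (p ^ a)).ncard ≤ _ := Set.ncard_le_ncard hsub (Finset.finite_toSet _)
    _ ≤ a + 1 := by
        rw [Set.ncard_coe_finset]
        exact card_image_le.trans_eq (card_range _)

theorem associatesOfNorm_eq_empty_of_mod_four_eq_three {n : ℕ} (hn : n % 4 = 3) :
    associatesOfNorm n = ∅ := by
  refine Set.image_eq_empty.2 (Set.eq_empty_of_forall_notMem fun z hz ↦ ?_)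
  have hsq : ∀ a b : ZMod 4, a ^ 2 + b ^ 2 ≠ 3 := by decide
  refine hsq z.re z.im ?_
  have hn3 : (n : ZMod 4) = 3 := (ZMod.natCast_eq_natCast_iff' n 3 4).2 hn
  rw [← hn3]
  exact_mod_cast congrArg (Int.cast : ℤ → ZMod 4) (natAbs_norm_eq_iff.1 hz)

theorem setOf_isUnit_gaussianInt :
    {u : GaussianInt | IsUnit u} = ({1, -1, ⟨0, 1⟩, ⟨0, -1⟩} : Finset GaussianInt) := by
  ext ⟨x, y⟩
  rw [Set.mem_ofPred_eq, ← Zsqrtd.norm_eq_one_iff, natAbs_norm_eq_iff, Nat.cast_one]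
  simp only [mem_coe, mem_insert, mem_singleton, Zsqrtd.ext_iff]
  constructor
  · intro h
    have hx : x ≤ 1 ∧ -1 ≤ x := by constructor <;> nlinarith [sq_nonneg y]
    have hy : y ≤ 1 ∧ -1 ≤ y := by constructor <;> nlinarith [sq_nonneg x]
    obtain ⟨⟨hx₁, hx₂⟩, hy₁, hy₂⟩ := And.intro hx hy
    interval_cases x <;> interval_cases y <;> simp_all
  · rintro (⟨rfl, rfl⟩ | ⟨rfl, rfl⟩ | ⟨rfl, rfl⟩ | ⟨rfl, rfl⟩) <;> norm_num

theorem ncard_isUnit_gaussianInt : {u : GaussianInt | IsUnit u}.ncard = 4 := by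
  rw [setOf_isUnit_gaussianInt, Set.ncard_coe_finset]
  rfl

theorem r2_eq_ncard_natAbs_norm (n : ℕ) : r2 n = {z : GaussianInt | z.norm.natAbs = n}.ncard := by
  refine Set.ncard_congr (fun l _ ↦ (⟨l.1, l.2⟩ : GaussianInt)) ?_ ?_ ?_
  · exact fun l hl ↦ natAbs_norm_eq_iff.2 hl
  · exact fun l l' _ _ h ↦ Prod.ext (congrArg Zsqrtd.re h) (congrArg Zsqrtd.im h)
  · exact fun z hz ↦ ⟨(z.re, z.im), natAbs_norm_eq_iff.1 hz, rfl⟩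

theorem r2_eq_four_mul_ncard_associatesOfNorm {n : ℕ} (hn : n ≠ 0) :
    r2 n = 4 * (associatesOfNorm n).ncard := by
  obtain ⟨rep, hrep⟩ := (Associates.mk_surjective (M := GaussianInt)).hasRightInverse
  have hmk {u : GaussianInt} (hu : IsUnit u) (c : Associates GaussianInt) :
      Associates.mk (u * rep c) = c := by
    rw [← Associates.mk_mul_mk, Associates.mk_eq_one.2 hu, one_mul, hrep]
  rw [r2_eq_ncard_natAbs_norm, ← ncard_isUnit_gaussianInt, ← Set.ncard_prod]
  refine (Set.ncard_congr (fun uc _ ↦ uc.1 * rep uc.2) ?_ ?_ ?_).symm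
  · rintro ⟨u, c⟩ ⟨hu, hc⟩
    rw [Set.mem_ofPred_eq, ← mk_mem_associatesOfNorm, hmk hu]
    exact hc
  · rintro ⟨u, c⟩ ⟨v, d⟩ ⟨hu, hc⟩ ⟨hv, -⟩ huv
    obtain rfl : c = d := by rw [← hmk hu c, ← hmk hv d]; exact congrArg Associates.mk huv
    have hrep_ne : rep c ≠ 0 := by
      intro h
      rw [← hrep c, h] at hc
      exact hn (mk_mem_associatesOfNorm.1 hc).symm
    exact Prod.ext (mul_right_cancel₀ hrep_ne huv) rfl
  · intro z hz
    obtain ⟨u, hu⟩ := Associates.mk_eq_mk_iff_associated.1 (hrep (Associates.mk z))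
    exact ⟨(u, Associates.mk z), ⟨u.isUnit, z, hz, rfl⟩, (mul_comm _ _).trans hu⟩

theorem not_associated_star_of_natAbs_norm_eq_prime {p : ℕ} (hp : p.Prime) (hp2 : p ≠ 2)
    {z : GaussianInt} (hz : z.norm.natAbs = p) : ¬Associated z (star z) := by
  rintro ⟨u, hu⟩
  have hsq : ¬IsSquare (p : ℤ) := (Nat.prime_iff_prime_int.1 hp).irreducible.not_isSquare
  have hodd : p % 2 = 1 := hp.eq_two_or_odd.resolve_left hp2
  have hmem : (u : GaussianInt) ∈ {u : GaussianInt | IsUnit u} := u.isUnit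
  rw [setOf_isUnit_gaussianInt] at hmem
  rw [natAbs_norm_eq_iff] at hz
  simp only [coe_insert, coe_singleton, Set.mem_insert_iff, Set.mem_singleton_iff] at hmem
  have hcases : z.im = 0 ∨ z.re = 0 ∨ z.re = z.im ∨ z.re = -z.im := by
    have hre := congrArg Zsqrtd.re hu
    have him := congrArg Zsqrtd.im hu
    rw [Zsqrtd.re_mul, Zsqrtd.re_star] at hre
    rw [Zsqrtd.im_mul, Zsqrtd.im_star] at him
    rcases hmem with h | h | h | h <;> rw [h] at hre him <;>
      simp only [Zsqrtd.re_one, Zsqrtd.im_one, Zsqrtd.re_neg, Zsqrtd.im_neg] at hre him <;> lia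
  rcases hcases with h | h | h | h <;> rw [h] at hz
  · exact hsq ⟨z.re, by linarith⟩
  · exact hsq ⟨z.im, by linarith⟩
  · lia
  · have : (p : ℤ) = 2 * z.im ^ 2 := by linarith
    lia

theorem ncard_associatesOfNorm_prime {p : ℕ} (hp : p.Prime) (hp1 : p % 4 = 1) :
    (associatesOfNorm p).ncard = 2 := by
  have := Fact.mk hp
  obtain ⟨x, y, hxy⟩ := Nat.Prime.sq_add_sq (p := p) (by lia)
  have hz : (⟨x, y⟩ : GaussianInt).norm.natAbs = p :=
    natAbs_norm_eq_iff.2 (by dsimp only; exact_mod_cast hxy)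
  have hz_star : (star (⟨x, y⟩ : GaussianInt)).norm.natAbs = p := by rwa [Zsqrtd.norm_conj]
  refine le_antisymm (by simpa using ncard_associatesOfNorm_prime_pow_le hp 1) ?_
  have hne := not_associated_star_of_natAbs_norm_eq_prime hp (by lia) hz
  rw [← Set.ncard_pair (mt Associates.mk_eq_mk_iff_associated.1 hne)]
  refine Set.ncard_le_ncard ?_ (finite_associatesOfNorm hp.ne_zero)
  exact Set.pair_subset ⟨_, hz, rfl⟩ ⟨_, hz_star, rfl⟩

/-! ### Moments and large deviations of r₂ -/

/-- The number `r₂(n) / 4` of ideals of norm `n` in `ℤ[i]`, for `n ≠ 0`; unlike `r₂` it is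
multiplicative. -/
noncomputable def idealCount : ArithmeticFunction ℕ :=
  ⟨fun n ↦ if n = 0 then 0 else (associatesOfNorm n).ncard, if_pos rfl⟩

theorem idealCount_apply {n : ℕ} (hn : n ≠ 0) : idealCount n = (associatesOfNorm n).ncard :=
  if_neg hn

theorem r2_eq_four_mul_idealCount {n : ℕ} (hn : n ≠ 0) : r2 n = 4 * idealCount n := by
  rw [r2_eq_four_mul_ncard_associatesOfNorm hn, idealCount_apply hn]

theorem isMultiplicative_idealCount : idealCount.IsMultiplicative := by
  refine IsMultiplicative.iff_ne_zero.2 ⟨?_, fun {m n} hm hn hmn ↦ ?_⟩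
  · rw [idealCount_apply one_ne_zero, associatesOfNorm_one, Set.ncard_singleton]
  · rw [idealCount_apply (mul_ne_zero hm hn), idealCount_apply hm, idealCount_apply hn,
      ncard_associatesOfNorm_mul hmn]

theorem idealCount_ne_zero {n : ℕ} (hn : n ≠ 0) (h : IsSumOfTwoSquares n) : idealCount n ≠ 0 := by
  obtain ⟨a, b, hab⟩ := h
  rw [idealCount_apply hn]
  have hnorm : (⟨a, b⟩ : GaussianInt).norm.natAbs = n := natAbs_norm_eq_iff.2 hab
  exact Set.ncard_ne_zero_of_mem (mk_mem_associatesOfNorm.2 hnorm) (finite_associatesOfNorm hn)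

theorem log_r2_eq {n : ℕ} (hn : idealCount n ≠ 0) :
    Real.log (r2 n) = 2 * Real.log 2 + Real.log (idealCount n) := by
  have hn₀ : n ≠ 0 := by
    rintro rfl
    exact hn idealCount.map_zero
  rw [r2_eq_four_mul_idealCount hn₀, Nat.cast_mul, Real.log_mul (by norm_num) (mod_cast hn),
    show ((4 : ℕ) : ℝ) = 2 ^ 2 by norm_num, Real.log_pow, Nat.cast_ofNat]

/-- The power `(r₂ / 4) ^ t`, read as `0` where `r₂` vanishes, for every real `t`. -/
noncomputable def idealCountRpow (t : ℝ) : ArithmeticFunction ℝ :=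
  ⟨fun n ↦ if idealCount n = 0 then 0 else (idealCount n : ℝ) ^ t, if_pos idealCount.map_zero⟩

theorem idealCountRpow_apply {n : ℕ} (hn : idealCount n ≠ 0) (t : ℝ) :
    idealCountRpow t n = (idealCount n : ℝ) ^ t := by
  rw [idealCountRpow, coe_mk, if_neg hn]

theorem idealCountRpow_eq_zero {n : ℕ} (hn : idealCount n = 0) (t : ℝ) :
    idealCountRpow t n = 0 := by
  rw [idealCountRpow, coe_mk, if_pos hn]

theorem idealCountRpow_nonneg (t : ℝ) (n : ℕ) : 0 ≤ idealCountRpow t n := by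
  by_cases hn : idealCount n = 0
  · rw [idealCountRpow_eq_zero hn]
  · rw [idealCountRpow_apply hn]
    positivity

theorem isMultiplicative_idealCountRpow (t : ℝ) : (idealCountRpow t).IsMultiplicative := by
  have hone : idealCount 1 = 1 := isMultiplicative_idealCount.map_one
  refine ⟨?_, fun {m n} hmn ↦ ?_⟩
  · rw [idealCountRpow_apply (by rw [hone]; exact one_ne_zero), hone, Nat.cast_one, Real.one_rpow]
  have hmul : idealCount (m * n) = idealCount m * idealCount n :=
    isMultiplicative_idealCount.map_mul_of_coprime hmn
  by_cases hm : idealCount m = 0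
  · rw [idealCountRpow_eq_zero (by rw [hmul, hm, zero_mul]), idealCountRpow_eq_zero hm, zero_mul]
  by_cases hn : idealCount n = 0
  · rw [idealCountRpow_eq_zero (by rw [hmul, hn, mul_zero]), idealCountRpow_eq_zero hn, mul_zero]
  rw [idealCountRpow_apply (hmul ▸ mul_ne_zero hm hn), idealCountRpow_apply hm,
    idealCountRpow_apply hn, hmul, Nat.cast_mul,
    Real.mul_rpow (Nat.cast_nonneg _) (Nat.cast_nonneg _)]

theorem idealCountRpow_prime_pow_le {t : ℝ} (ht : t ≤ 1) {p : ℕ} (hp : p.Prime) (a : ℕ) :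
    idealCountRpow t (p ^ a) ≤ a + 1 := by
  by_cases hpa : idealCount (p ^ a) = 0
  · rw [idealCountRpow_eq_zero hpa]
    positivity
  have hle : idealCount (p ^ a) ≤ a + 1 := by
    rw [idealCount_apply (pow_ne_zero a hp.ne_zero)]
    exact ncard_associatesOfNorm_prime_pow_le hp a
  calc idealCountRpow t (p ^ a) = (idealCount (p ^ a) : ℝ) ^ t := idealCountRpow_apply hpa t
    _ ≤ (idealCount (p ^ a) : ℝ) ^ (1 : ℝ) :=
        Real.rpow_le_rpow_of_exponent_le (mod_cast Nat.one_le_iff_ne_zero.2 hpa) ht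
    _ ≤ a + 1 := by
        rw [Real.rpow_one]
        exact_mod_cast hle

theorem isBigO_sum_idealCountRpow {t : ℝ} (ht : t ≤ 1) :
    (fun N : ℕ ↦ ∑ n ∈ Ioc 0 N, idealCountRpow t n) =O[atTop]
      fun N : ℕ ↦ (N : ℝ) * Real.log N ^ ((2 : ℝ) ^ t / 2 - 1) := by
  refine isBigO_sum_of_prime_mod_four (isMultiplicative_idealCountRpow t)
    (idealCountRpow_nonneg t) (fun p a hp ↦ idealCountRpow_prime_pow_le ht hp a)
    (by positivity) (fun p hp hp1 ↦ ?_) fun p hp hp3 ↦ ?_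
  · have hcount : idealCount p = 2 := by
      rw [idealCount_apply hp.ne_zero, ncard_associatesOfNorm_prime hp hp1]
    rw [idealCountRpow_apply (by rw [hcount]; exact two_ne_zero), hcount, Nat.cast_ofNat]
  · refine idealCountRpow_eq_zero ?_ t
    rw [idealCount_apply hp.ne_zero, associatesOfNorm_eq_empty_of_mod_four_eq_three hp3,
      Set.ncard_empty]

/-- The `n ≤ N` for which `t * log (r₂(n) / 4)` is at least `β * log log N`: for `t > 0` an upper
tail, for `t < 0` a lower tail of the distribution of `r₂` on the sums of two squares. -/
noncomputable def tailSet (t β : ℝ) (N : ℕ) : Finset ℕ :=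
  {n ∈ Ioc 0 N | idealCount n ≠ 0 ∧
    β * Real.log (Real.log N) ≤ t * Real.log (idealCount n)}

-- Rankin's trick: an element of the tail contributes at least `(log N) ^ β` to the moment.
theorem card_tailSet_mul_le (t β : ℝ) {N : ℕ} (hN : 1 < N) :
    #(tailSet t β N) * Real.log N ^ β ≤ ∑ n ∈ Ioc 0 N, idealCountRpow t n := by
  have hlog : 0 < Real.log N := Real.log_pos (mod_cast hN)
  calc #(tailSet t β N) * Real.log N ^ β = ∑ _n ∈ tailSet t β N, Real.log N ^ β := by
        rw [sum_const, nsmul_eq_mul]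
    _ ≤ ∑ n ∈ tailSet t β N, idealCountRpow t n := by
        refine sum_le_sum fun n hn ↦ ?_
        obtain ⟨-, hn₀, htail⟩ := mem_filter.1 hn
        rw [idealCountRpow_apply hn₀, Real.rpow_def_of_pos hlog,
          Real.rpow_def_of_pos (mod_cast Nat.pos_of_ne_zero hn₀), mul_comm, mul_comm (Real.log _)]
        exact Real.exp_le_exp.2 htail
    _ ≤ ∑ n ∈ Ioc 0 N, idealCountRpow t n :=
        sum_le_sum_of_subset_of_nonneg (filter_subset _ _) fun n _ _ ↦ idealCountRpow_nonneg t n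

theorem isBigO_card_tailSet {t : ℝ} (ht : t ≤ 1) (β : ℝ) :
    (fun N ↦ (#(tailSet t β N) : ℝ)) =O[atTop]
      fun N : ℕ ↦ (N : ℝ) * Real.log N ^ ((2 : ℝ) ^ t / 2 - 1 - β) := by
  have hmoment := (isBigO_sum_idealCountRpow ht).mul
    (isBigO_refl (fun N : ℕ ↦ Real.log N ^ (-β)) atTop)
  refine (IsBigO.of_bound' ?_).trans (hmoment.congr' EventuallyEq.rfl ?_)
  · filter_upwards [eventually_gt_atTop 1] with N hN
    have hlog : 0 < Real.log N := Real.log_pos (mod_cast hN)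
    rw [Real.norm_of_nonneg (Nat.cast_nonneg _), Real.rpow_neg hlog.le, ← div_eq_mul_inv]
    exact ((le_div_iff₀ (by positivity)).2 (card_tailSet_mul_le t β hN)).trans (le_abs_self _)
  · filter_upwards [eventually_gt_atTop 1] with N hN
    have hlog : 0 < Real.log N := Real.log_pos (mod_cast hN)
    rw [mul_assoc, ← Real.rpow_add hlog, sub_eq_add_neg _ β]

theorem two_rpow_le {t : ℝ} (ht : |t| ≤ 1) : (2 : ℝ) ^ t ≤ 1 + t * Real.log 2 + t ^ 2 := by
  have hlog_nonneg : 0 ≤ Real.log 2 := Real.log_nonneg one_le_two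
  have hlog_le : Real.log 2 ≤ 1 := by linarith [Real.log_two_lt_d9]
  have habs : |Real.log 2 * t| ≤ |t| := by
    rw [abs_mul, abs_of_nonneg hlog_nonneg]
    exact mul_le_of_le_one_left (abs_nonneg t) hlog_le
  have hexp := (abs_le.1 (Real.abs_exp_sub_one_sub_id_le (habs.trans ht))).2
  rw [Real.rpow_def_of_pos two_pos]
  linarith [sq_le_sq.2 habs]

/-- The sums of two squares `n ≤ N`, `n ≠ 0`, for which `log (r₂(n) / 4)` deviates from
`(log 2 / 2) * log log N` by at least `ε * log log N`. -/
noncomputable def deviationSet (ε : ℝ) (N : ℕ) : Finset ℕ :=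
  {n ∈ Ioc 0 N | idealCount n ≠ 0 ∧ ε * Real.log (Real.log N) ≤
    |Real.log (idealCount n) - Real.log 2 / 2 * Real.log (Real.log N)|}

theorem deviationSet_subset {δ : ℝ} (hδ : 0 ≤ δ) (ε : ℝ) (N : ℕ) :
    deviationSet ε N ⊆ tailSet δ (δ * (Real.log 2 / 2) + δ * ε) N ∪
      tailSet (-δ) (-δ * (Real.log 2 / 2) + δ * ε) N := by
  intro n hn
  obtain ⟨hnN, hn₀, hdev⟩ := mem_filter.1 hn
  rw [mem_union, tailSet, tailSet, mem_filter, mem_filter]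
  refine (le_abs.1 hdev).imp (fun h ↦ ⟨hnN, hn₀, ?_⟩) fun h ↦ ⟨hnN, hn₀, ?_⟩ <;>
    linarith [mul_le_mul_of_nonneg_left h hδ]

theorem exists_isBigO_card_deviationSet {ε : ℝ} (hε : 0 < ε) :
    ∃ η > 0, (fun N ↦ (#(deviationSet ε N) : ℝ)) =O[atTop]
      fun N : ℕ ↦ (N : ℝ) * Real.log N ^ (-1 / 2 - η : ℝ) := by
  obtain ⟨δ, hδ, hδ1, hδε⟩ : ∃ δ > 0, δ ≤ 1 ∧ δ ≤ ε :=
    ⟨min 1 ε, lt_min one_pos hε, min_le_left _ _, min_le_right _ _⟩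
  have htail {t : ℝ} (ht : |t| = δ) :
      (fun N ↦ (#(tailSet t (t * (Real.log 2 / 2) + δ * ε) N) : ℝ)) =O[atTop]
        fun N : ℕ ↦ (N : ℝ) * Real.log N ^ (-1 / 2 - δ * ε / 2 : ℝ) := by
    have hexponent :
        (2 : ℝ) ^ t / 2 - 1 - (t * (Real.log 2 / 2) + δ * ε) ≤ -1 / 2 - δ * ε / 2 := by
      have hsq : t ^ 2 ≤ δ * ε := by
        rw [← sq_abs, ht, sq]
        exact mul_le_mul_of_nonneg_left hδε hδ.le
      linarith [two_rpow_le (ht.trans_le hδ1)]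
    refine (isBigO_card_tailSet ((le_abs_self t).trans (ht.trans_le hδ1)) _).trans
      (IsBigO.of_bound' ?_)
    filter_upwards [(Real.tendsto_log_atTop.comp tendsto_natCast_atTop_atTop).eventually_ge_atTop 1]
      with N hN
    have hlog : 1 ≤ Real.log N := hN
    rw [Real.norm_of_nonneg (by positivity), Real.norm_of_nonneg (by positivity)]
    gcongr
  refine ⟨δ * ε / 2, by positivity, (IsBigO.of_norm_le fun N ↦ ?_).trans
    ((htail (abs_of_pos hδ)).add (htail (by rw [abs_neg, abs_of_pos hδ])))⟩
  rw [Real.norm_of_nonneg (Nat.cast_nonneg _)]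
  exact_mod_cast (card_le_card (deviationSet_subset hδ.le ε N)).trans (card_union_le _ _)

theorem isLittleO_card_deviationSet {ε : ℝ} (hε : 0 < ε) :
    (fun N ↦ (#(deviationSet ε N) : ℝ)) =o[atTop]
      fun N : ℕ ↦ (N : ℝ) * Real.log N ^ (-1 / 2 : ℝ) := by
  obtain ⟨η, hη, hO⟩ := exists_isBigO_card_deviationSet hε
  have hsmall : (fun N : ℕ ↦ Real.log N ^ (-η)) =o[atTop] fun _ ↦ (1 : ℝ) :=
    (isLittleO_one_iff ℝ).2 ((tendsto_rpow_neg_atTop hη).comp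
      (Real.tendsto_log_atTop.comp tendsto_natCast_atTop_atTop))
  refine hO.trans_isLittleO (((isBigO_refl _ _).mul_isLittleO hsmall).congr' ?_
    (Eventually.of_forall fun N ↦ mul_one _))
  filter_upwards [eventually_gt_atTop 1] with N hN
  rw [mul_assoc, ← Real.rpow_add (Real.log_pos (mod_cast hN)), sub_eq_add_neg _ η]

theorem isBigO_sqrt_add_one :
    (fun N : ℕ ↦ ((N.sqrt + 1 : ℕ) : ℝ)) =O[atTop] fun N : ℕ ↦ (N : ℝ) ^ (1 / 2 : ℝ) := by
  refine IsBigO.of_bound 2 ?_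
  filter_upwards [eventually_ge_atTop 1] with N hN
  have hone : (1 : ℝ) ≤ √N := Real.one_le_sqrt.2 (mod_cast hN)
  have hsqrt : (N.sqrt : ℝ) ≤ √N := Real.nat_sqrt_le_real_sqrt
  rw [← Real.sqrt_eq_rpow, Real.norm_of_nonneg (Nat.cast_nonneg _),
    Real.norm_of_nonneg (Real.sqrt_nonneg _), Nat.cast_add_one]
  linarith

theorem isLittleO_sqrt_add_one :
    (fun N : ℕ ↦ ((N.sqrt + 1 : ℕ) : ℝ)) =o[atTop]
      fun N : ℕ ↦ (N : ℝ) * Real.log N ^ (-1 / 2 : ℝ) := by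
  have hlog : (fun N : ℕ ↦ Real.log N ^ (1 / 2 : ℝ)) =o[atTop] fun N : ℕ ↦ (N : ℝ) ^ (1 / 2 : ℝ) :=
    (isLittleO_log_rpow_rpow_atTop _ (by norm_num)).comp_tendsto tendsto_natCast_atTop_atTop
  have hmul := (isBigO_refl (fun N : ℕ ↦ (N : ℝ) ^ (1 / 2 : ℝ) * Real.log N ^ (-1 / 2 : ℝ))
    atTop).mul_isLittleO hlog
  refine isBigO_sqrt_add_one.trans_isLittleO (hmul.congr' ?_ ?_) <;>
    filter_upwards [eventually_gt_atTop 1] with N hN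
  · rw [mul_assoc, ← Real.rpow_add (Real.log_pos (mod_cast hN)),
      show (-1 / 2 + 1 / 2 : ℝ) = 0 by norm_num, Real.rpow_zero, mul_one]
  · rw [mul_right_comm, ← Real.rpow_add (by positivity), add_halves, Real.rpow_one]

/-- The sums of two squares `n ≤ N` for which `r₂(n)` is not `(log n) ^ (log 2 / 2 + θ)` with
`|θ| ≤ ε`. Division by zero puts `log r₂(n) / log log n = 0` at `n = 0` and `n = 1`; these finitely
many `n` do not matter. -/
def exceptionalSet (ε : ℝ) (N : ℕ) : Set ℕ :=
  {n | n ≤ N ∧ IsSumOfTwoSquares n ∧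
    |Real.log (r2 n) / Real.log (Real.log n) - Real.log 2 / 2| > ε}

theorem log_log_mem_Icc {n N : ℕ} (hN : 1 < N) (hnN : n ≤ N) (hNn : N ≤ n ^ 2) :
    Real.log (Real.log n) ∈
      Set.Icc (Real.log (Real.log N) - Real.log 2) (Real.log (Real.log N)) := by
  have hn : 0 < n := Nat.pos_of_ne_zero (by rintro rfl; lia)
  have hlogN : 0 < Real.log N := Real.log_pos (mod_cast hN)
  have hhalf : Real.log N / 2 ≤ Real.log n := by
    have := Real.log_le_log (by positivity) (show (N : ℝ) ≤ (n : ℝ) ^ 2 by exact_mod_cast hNn)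
    rw [Real.log_pow, Nat.cast_ofNat] at this
    linarith
  constructor
  · rw [← Real.log_div hlogN.ne' two_ne_zero]
    exact Real.log_le_log (half_pos hlogN) hhalf
  · exact Real.log_le_log (by linarith) (Real.log_le_log (mod_cast hn) (mod_cast hnN))

theorem half_mul_le_abs_sub {ε y l L : ℝ} (hε : 0 < ε) (hlL : l ∈ Set.Icc (L - Real.log 2) L)
    (hL : 2 * (ε + 3) / ε ≤ L)
    (hdev : |(2 * Real.log 2 + y) / l - Real.log 2 / 2| > ε) :
    ε / 2 * L ≤ |y - Real.log 2 / 2 * L| := by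
  obtain ⟨hLl, hlL⟩ := hlL
  have hlog_pos : 0 < Real.log 2 := Real.log_pos one_lt_two
  have hlog_le : Real.log 2 ≤ 1 := by linarith [Real.log_two_lt_d9]
  have hsq : Real.log 2 * Real.log 2 ≤ 1 := by nlinarith
  have hLε : 2 * (ε + 3) ≤ L * ε := (div_le_iff₀ hε).1 hL
  have hl : 0 < l := by nlinarith
  rcases lt_abs.1 hdev with h | h
  · have hmul : (Real.log 2 / 2 + ε) * l < 2 * Real.log 2 + y := by
      rw [← lt_div_iff₀ hl]
      linarith
    refine le_trans ?_ (le_abs_self _)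
    nlinarith
  · have hmul : 2 * Real.log 2 + y < (Real.log 2 / 2 - ε) * l := by
      rw [← div_lt_iff₀ hl]
      linarith
    refine le_trans ?_ (neg_le_abs _)
    nlinarith

theorem eventually_exceptionalSet_subset {ε : ℝ} (hε : 0 < ε) :
    ∀ᶠ N : ℕ in atTop, exceptionalSet ε N ⊆ ↑(range (N.sqrt + 1) ∪ deviationSet (ε / 2) N) := by
  have hloglog : Tendsto (fun N : ℕ ↦ Real.log (Real.log N)) atTop atTop :=
    Real.tendsto_log_atTop.comp (Real.tendsto_log_atTop.comp tendsto_natCast_atTop_atTop)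
  filter_upwards [eventually_gt_atTop 1, hloglog.eventually_ge_atTop (2 * (ε + 3) / ε)]
    with N hN hL n hn
  obtain ⟨hnN, hsum, hdev⟩ := hn
  rw [mem_coe, mem_union, mem_range, Nat.lt_succ_iff, Nat.le_sqrt']
  refine or_iff_not_imp_left.2 fun hsq ↦ ?_
  have hn₀ : n ≠ 0 := by
    rintro rfl
    lia
  have hcount := idealCount_ne_zero hn₀ hsum
  rw [log_r2_eq hcount] at hdev
  rw [deviationSet, mem_filter, mem_Ioc]
  exact ⟨⟨Nat.pos_of_ne_zero hn₀, hnN⟩, hcount,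
    half_mul_le_abs_sub hε (log_log_mem_Icc hN hnN (by lia)) hL hdev⟩

theorem isLittleO_ncard_exceptionalSet {ε : ℝ} (hε : 0 < ε) :
    (fun N : ℕ ↦ ((exceptionalSet ε N).ncard : ℝ)) =o[atTop]
      fun N : ℕ ↦ (N : ℝ) * Real.log N ^ (-1 / 2 : ℝ) := by
  refine (IsBigO.of_bound' ?_).trans_isLittleO
    (isLittleO_sqrt_add_one.add (isLittleO_card_deviationSet (half_pos hε)))
  filter_upwards [eventually_exceptionalSet_subset hε] with N hN
  have hcard := Set.ncard_le_ncard hN (Finset.finite_toSet _)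
  rw [Set.ncard_coe_finset] at hcard
  rw [Real.norm_of_nonneg (by positivity), Real.norm_of_nonneg (by positivity)]
  exact_mod_cast (hcard.trans (card_union_le _ _)).trans_eq (by rw [card_range])

end SumsOfTwoSquares

/-- For almost all n ∈ S (sums of two squares), r₂(n) = (log n)^{(log 2)/2 + o(1)}:
for every ε > 0 the exceptional n ≤ N form a set of size o(#{n ∈ S : n ≤ N}). -/
theorem stmt18 (ε : ℝ) (hε : 0 < ε) :
    Filter.Tendsto (fun N : ℕ =>
      ((Set.ncard {n : ℕ | n ≤ N ∧ (∃ a b : ℤ, a ^ 2 + b ^ 2 = (n : ℤ)) ∧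
          |Real.log (r2 n) / Real.log (Real.log n) - Real.log 2 / 2| > ε} : ℝ) /
        (Set.ncard {n : ℕ | n ≤ N ∧ ∃ a b : ℤ, a ^ 2 + b ^ 2 = (n : ℤ)} : ℝ)))
      Filter.atTop (nhds 0) := by
  exact ((SumsOfTwoSquares.isLittleO_ncard_exceptionalSet hε).trans_isBigO
    SumsOfTwoSquares.isBigO_ncard_isSumOfTwoSquares).tendsto_div_nhds_zero
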